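/- For every s ∈ H₀(ℂ), all the integrals Z₀(s;I) and Z₁(s;T∖I) (for I ⊆ T) converge absolutely and the p-adic open string N-point zeta function satisfies the decomposition Z^{(N)}(s) = Σ_{I⊆T} p^{M_I(s)} Z₀(s;I) Z₁(s;T∖I), where M_I(s) = |T∖I| + Σ_{i∈T∖I}(s_{1i}+s_{(N−1)i}) + Σ_{2≤i<j≤N−2, i∈T∖I, j∈T} s_{ij} + Σ_{2≤i<j≤N−2, i∈I, j∈T∖I} s_{ij}, and Z₀(s;∅) = Z₁(s;∅) = 1 by convention. -/

import Mathlib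

open MeasureTheory Finset

noncomputable section

instance padicMS (p : ℕ) [Fact p.Prime] : MeasurableSpace ℚ_[p] := borel _
instance padicBS (p : ℕ) [Fact p.Prime] : BorelSpace ℚ_[p] := ⟨rfl⟩

/-- The closed unit ball of `ℚ_[p]` (i.e. `ℤ_[p]`) as a positive compact subset. -/
def padicBall (p : ℕ) [Fact p.Prime] : TopologicalSpace.PositiveCompacts ℚ_[p] where
  carrier := Metric.closedBall 0 1
  isCompact' := isCompact_closedBall 0 1
  interior_nonempty' := ⟨0, Metric.ball_subset_interior_closedBall (Metric.mem_ball_self one_pos)⟩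

/-- The Haar measure on `(ℚ_[p], +)`, normalized so that `ℤ_[p]` has measure `1`. -/
def padicHaar (p : ℕ) [Fact p.Prime] : Measure ℚ_[p] :=
  Measure.addHaarMeasure (padicBall p)

instance padicHaarSF (p : ℕ) [Fact p.Prime] : SigmaFinite (padicHaar p) := by
  unfold padicHaar; infer_instance

/-- The product of normalized Haar measures on a finite power of `ℚ_[p]`. -/
def padicPi (p : ℕ) [Fact p.Prime] (ι : Type) [Fintype ι] : Measure (ι → ℚ_[p]) :=
  Measure.pi fun _ => padicHaar p

/-- `T = {2, …, N-2}`. -/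
def Tset (N : ℕ) : Finset ℕ := Finset.Icc 2 (N - 2)

/-- The ordered pairs `(i, j)` with `i < j` and `i, j ∈ A`. -/
def pairsIn (A : Finset ℕ) : Finset (ℕ × ℕ) := (A ×ˢ A).filter fun q => q.1 < q.2

/-- The coordinates of a point of `ℚ_p^A`, as a function on `ℕ` (junk value `0` off `A`). -/
def padicCoord {p : ℕ} [Fact p.Prime] {A : Finset ℕ} (x : A → ℚ_[p]) (n : ℕ) : ℚ_[p] :=
  if h : n ∈ A then x ⟨n, h⟩ else 0

/-- The complement of the divisor `Λ` in `ℚ_p^{N-3}` (the domain of the Koba–Nielsen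
integrand). -/
def ZNset (p N : ℕ) [Fact p.Prime] : Set (↥(Tset N) → ℚ_[p]) :=
  {x | (∀ i, x i ≠ 0 ∧ x i ≠ 1) ∧
    ∀ q ∈ pairsIn (Tset N), padicCoord x q.1 ≠ padicCoord x q.2}

/-- The Koba–Nielsen integrand
`∏ |x_i|^{s_{1i}} |1-x_i|^{s_{(N-1)i}} ∏ |x_i-x_j|^{s_{ij}}`. -/
def ZNintegrand (p N : ℕ) [Fact p.Prime] (s : ℕ → ℕ → ℂ) (x : ↥(Tset N) → ℚ_[p]) : ℂ :=
  (∏ i ∈ Tset N,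
    (‖padicCoord x i‖ : ℂ) ^ s 1 i * (‖1 - padicCoord x i‖ : ℂ) ^ s (N - 1) i) *
  ∏ q ∈ pairsIn (Tset N), (‖padicCoord x q.1 - padicCoord x q.2‖ : ℂ) ^ s q.1 q.2

/-- The conditions `C1'`–`C4'` defining `H₀(ℂ)`. -/
def H0C (N : ℕ) (s : ℕ → ℕ → ℂ) : Prop :=
  (∀ J ⊆ Tset N, J.Nonempty →
    (J.card : ℝ) + (∑ i ∈ J, ((s 1 i).re + (s (N - 1) i).re)) +
      (∑ q ∈ (pairsIn (Tset N)).filter (fun q => q.1 ∈ J), (s q.1 q.2).re) +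
      (∑ q ∈ (pairsIn (Tset N)).filter (fun q => q.1 ∉ J ∧ q.2 ∈ J), (s q.1 q.2).re) < 0) ∧
  (∀ J ⊆ Tset N, 2 ≤ J.card →
    (0 : ℝ) < (J.card : ℝ) - 1 + ∑ q ∈ pairsIn J, (s q.1 q.2).re) ∧
  (∀ t ∈ ({1, N - 1} : Finset ℕ), ∀ J ⊆ Tset N, ∀ S ⊆ J, (2 ≤ J.card ∨ 1 ≤ S.card) →
    (0 : ℝ) < (J.card : ℝ) + (∑ i ∈ S, (s t i).re) + ∑ q ∈ pairsIn J, (s q.1 q.2).re) ∧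
  ((∀ i ∈ Tset N, -1 < (s 1 i).re ∧ -1 < (s (N - 1) i).re) ∧
    ∀ q ∈ pairsIn (Tset N), -1 < (s q.1 q.2).re)

/-- The domain of integration of `Z₀(s; I)` inside `ℤ_p^{|I|}` (off the zero locus). -/
def Z0set (p : ℕ) [Fact p.Prime] (I : Finset ℕ) : Set (↥I → ℚ_[p]) :=
  {x | (∀ i, ‖x i‖ ≤ 1 ∧ x i ≠ 0 ∧ x i ≠ 1) ∧
    ∀ q ∈ pairsIn I, padicCoord x q.1 ≠ padicCoord x q.2}

/-- The integrand of `Z₀(s; I)`. -/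
def Z0integrand (p N : ℕ) [Fact p.Prime] (s : ℕ → ℕ → ℂ) (I : Finset ℕ)
    (x : ↥I → ℚ_[p]) : ℂ :=
  (∏ i ∈ I,
    (‖padicCoord x i‖ : ℂ) ^ s 1 i * (‖1 - padicCoord x i‖ : ℂ) ^ s (N - 1) i) *
  ∏ q ∈ pairsIn I, (‖padicCoord x q.1 - padicCoord x q.2‖ : ℂ) ^ s q.1 q.2

/-- The domain of integration of `Z₁(s; J)` inside `ℤ_p^{|J|}` (off the zero locus). -/
def Z1set (p : ℕ) [Fact p.Prime] (J : Finset ℕ) : Set (↥J → ℚ_[p]) :=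
  {x | (∀ i, ‖x i‖ ≤ 1 ∧ x i ≠ 0) ∧
    ∀ q ∈ pairsIn J, padicCoord x q.1 ≠ padicCoord x q.2}

/-- The integrand of `Z₁(s; J)`. -/
def Z1integrand (p N : ℕ) [Fact p.Prime] (s : ℕ → ℕ → ℂ) (J : Finset ℕ)
    (x : ↥J → ℚ_[p]) : ℂ :=
  (∏ q ∈ pairsIn J, (‖padicCoord x q.1 - padicCoord x q.2‖ : ℂ) ^ s q.1 q.2) *
  ∏ i ∈ J, (‖padicCoord x i‖ : ℂ) ^
    (-(2 + s 1 i + s (N - 1) i + ∑ j ∈ (Tset N).erase i, s i j))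

/-- The exponent `M_I(s)`. -/
def Mexp (N : ℕ) (s : ℕ → ℕ → ℂ) (I : Finset ℕ) : ℂ :=
  ((Tset N \ I).card : ℂ) + (∑ i ∈ Tset N \ I, (s 1 i + s (N - 1) i)) +
    (∑ q ∈ (pairsIn (Tset N)).filter (fun q => q.1 ∈ Tset N \ I), s q.1 q.2) +
    ∑ q ∈ (pairsIn (Tset N)).filter (fun q => q.1 ∈ I ∧ q.2 ∈ Tset N \ I), s q.1 q.2

open scoped NNReal ENNReal

section ProductMeasure

variable {ι : Type*} [Fintype ι]

/-- **Tonelli's theorem** for a product of functions of the separate coordinates, indexed by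
`Fin n`. -/
theorem lintegral_fin_nat_prod_eq_prod {n : ℕ} {E : Type*} [MeasurableSpace E] {μ : Measure E}
    [SigmaFinite μ] (f : Fin n → E → ℝ≥0∞) (hf : ∀ i, Measurable (f i)) :
    ∫⁻ x : Fin n → E, ∏ i, f i (x i) ∂(Measure.pi fun _ => μ) = ∏ i, ∫⁻ x, f i x ∂μ := by
  induction n with
  | zero => simp
  | succ n ih =>
    have key := (measurePreserving_piFinSuccAbove (fun _ : Fin (n + 1) => μ) 0).symm
    have hm : Measurable fun y : Fin n → E => ∏ i : Fin n, f i.succ (y i) :=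
      Finset.measurable_fun_prod _ fun i _ => (hf _).comp (measurable_pi_apply i)
    rw [← key.lintegral_comp_emb (MeasurableEquiv.measurableEmbedding _), Fin.prod_univ_succ,
      ← ih (fun i => f i.succ) (fun i => hf _),
      ← lintegral_prod_mul (hf 0).aemeasurable hm.aemeasurable]
    refine lintegral_congr fun x => ?_
    rw [Fin.prod_univ_succ]
    rfl

/-- **Tonelli's theorem** for a product of functions of the separate coordinates. -/
theorem lintegral_fintype_prod_eq_prod {E : Type*} [MeasurableSpace E] {μ : Measure E}
    [SigmaFinite μ] (f : ι → E → ℝ≥0∞) (hf : ∀ i, Measurable (f i)) :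
    ∫⁻ x : ι → E, ∏ i, f i (x i) ∂(Measure.pi fun _ => μ) = ∏ i, ∫⁻ x, f i x ∂μ := by
  let e := (Fintype.equivFin ι).symm
  rw [← (measurePreserving_piCongrLeft (fun _ : ι => μ) e).lintegral_comp_emb
    (MeasurableEquiv.measurableEmbedding _), ← e.prod_comp,
    ← lintegral_fin_nat_prod_eq_prod (fun i => f (e i)) (fun i => hf _)]
  refine lintegral_congr fun x => ?_
  rw [← e.prod_comp]
  refine Finset.prod_congr rfl fun i _ => ?_
  rw [MeasurableEquiv.coe_piCongrLeft, Equiv.piCongrLeft_apply_apply (fun _ : ι => E) e x i]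

/-- The product of copies of a measure with density. -/
theorem pi_withDensity {E : Type*} [MeasurableSpace E] {μ : Measure E} [SigmaFinite μ]
    {w : E → ℝ≥0} (hw : Measurable w) :
    (Measure.pi fun _ : ι => μ.withDensity fun x => (w x : ℝ≥0∞)) =
      (Measure.pi fun _ : ι => μ).withDensity fun x => ((∏ i, w (x i) : ℝ≥0) : ℝ≥0∞) := by
  have := SigmaFinite.withDensity (μ := μ) w
  refine Measure.pi_eq fun s hs => ?_
  have hf : ∀ i, Measurable ((s i).indicator fun x => (w x : ℝ≥0∞)) :=
    fun i => hw.coe_nnreal_ennreal.indicator (hs i)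
  rw [withDensity_apply _ (MeasurableSet.univ_pi hs),
    ← lintegral_indicator (MeasurableSet.univ_pi hs)]
  simp_rw [withDensity_apply _ (hs _), ← lintegral_indicator (hs _)]
  rw [← lintegral_fintype_prod_eq_prod _ hf]
  refine lintegral_congr fun x => ?_
  by_cases hx : ∀ i, x i ∈ s i
  · rw [Set.indicator_of_mem (by simpa using hx), ENNReal.ofNNReal_finsetProd]
    exact Finset.prod_congr rfl fun i _ => by rw [Set.indicator_of_mem (hx i)]
  · rw [Set.indicator_of_notMem (by simpa using hx)]
    push Not at hx
    obtain ⟨i, hi⟩ := hx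
    exact (Finset.prod_eq_zero (mem_univ i) (by rw [Set.indicator_of_notMem hi])).symm

end ProductMeasure

section Haar

variable {p : ℕ} [hp : Fact p.Prime]

instance padicHaar_isAddHaarMeasure : (padicHaar p).IsAddHaarMeasure := by
  unfold padicHaar; infer_instance

instance padicPi_isAddHaarMeasure {ι : Type} [Fintype ι] : (padicPi p ι).IsAddHaarMeasure := by
  unfold padicPi; infer_instance

instance padicPi_sigmaFinite {ι : Type} [Fintype ι] : SigmaFinite (padicPi p ι) := by
  unfold padicPi; infer_instance

theorem padicHaar_closedBall_one : padicHaar p (Metric.closedBall 0 1) = 1 :=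
  Measure.addHaarMeasure_self (K₀ := padicBall p)

theorem padicHaar_add_preimage_closedBall (a : ℚ_[p]) (r : ℝ) :
    padicHaar p (Metric.closedBall a r) = padicHaar p (Metric.closedBall 0 r) := by
  rw [← measure_preimage_add (padicHaar p) a (Metric.closedBall a r)]
  congr 1
  ext x
  simp

theorem norm_lt_one_iff_le_inv (x : ℚ_[p]) : ‖x‖ < 1 ↔ ‖x‖ ≤ (p : ℝ)⁻¹ := by
  have := Padic.norm_le_pow_iff_norm_lt_pow_add_one x (-1)
  simpa using this.symm

theorem closedBall_one_eq_iUnion :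
    Metric.closedBall (0 : ℚ_[p]) 1 =
      ⋃ r ∈ range p, Metric.closedBall ((r : ℕ) : ℚ_[p]) (p : ℝ)⁻¹ := by
  ext x
  simp only [Metric.mem_closedBall, Set.mem_iUnion, mem_range, dist_eq_norm,
    ← norm_lt_one_iff_le_inv, exists_prop, sub_zero]
  constructor
  · intro hx
    refine ⟨PadicInt.zmodRepr ⟨x, hx⟩, PadicInt.zmodRepr_lt_p _, ?_⟩
    exact_mod_cast PadicInt.norm_sub_zmodRepr_lt_one ⟨x, hx⟩
  · rintro ⟨r, -, hr⟩
    have := Padic.nonarchimedean (x - (r : ℚ_[p])) r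
    rw [sub_add_cancel] at this
    exact this.trans (max_le hr.le (by exact_mod_cast Padic.norm_int_le_one (p := p) r))

theorem padicHaar_closedBall_inv :
    padicHaar p (Metric.closedBall 0 (p : ℝ)⁻¹) = (p : ℝ≥0∞)⁻¹ := by
  have h := padicHaar_closedBall_one (p := p)
  rw [closedBall_one_eq_iUnion, measure_biUnion_finset] at h
  · simp_rw [padicHaar_add_preimage_closedBall] at h
    rw [sum_const, card_range, nsmul_eq_mul] at h
    exact ENNReal.eq_inv_of_mul_eq_one_left (by rwa [mul_comm])
  · intro i hi j hj hij
    rw [Function.onFun, Set.disjoint_left]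
    intro x hxi hxj
    rw [Metric.mem_closedBall, dist_eq_norm, ← norm_lt_one_iff_le_inv] at hxi hxj
    refine hij ?_
    have hlt : ‖(((i : ℤ) - (j : ℤ) : ℤ) : ℚ_[p])‖ < 1 := by
      have := Padic.nonarchimedean (x - (j : ℚ_[p])) (-(x - (i : ℚ_[p])))
      rw [norm_neg] at this
      refine lt_of_le_of_lt (le_of_eq_of_le ?_ this) (max_lt hxj hxi)
      push_cast
      congr 1
      ring
    rw [Padic.norm_intCast_lt_one_iff] at hlt
    have hi' := mem_range.1 hi
    have hj' := mem_range.1 hj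
    have := Int.eq_zero_of_abs_lt_dvd hlt (by rw [abs_lt]; constructor <;> omega)
    omega
  · exact fun _ _ => Metric.isClosed_closedBall.measurableSet

/-- Multiplication by a nonzero scalar multiplies the Haar measure by a constant. -/
theorem exists_map_mul_padicHaar {c : ℚ_[p]} (hc : c ≠ 0) :
    ∃ k : ℝ≥0, Measure.map (c * ·) (padicHaar p) = k • padicHaar p := by
  have : (Measure.map (ContinuousLinearEquiv.unitsEquivAut ℚ_[p] (Units.mk0 c hc))
      (padicHaar p)).IsAddHaarMeasure := ContinuousLinearEquiv.isAddHaarMeasure_map _ _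
  have h := Measure.isAddLeftInvariant_eq_smul (Measure.map
      (ContinuousLinearEquiv.unitsEquivAut ℚ_[p] (Units.mk0 c hc)) (padicHaar p)) (padicHaar p)
  refine ⟨_, Eq.trans ?_ h⟩
  congr 1
  ext x
  simp [mul_comm]

theorem map_mul_padicHaar_mul {c d : ℚ_[p]}
    (hc : Measure.map (c * ·) (padicHaar p) = ‖c‖₊⁻¹ • padicHaar p)
    (hd : Measure.map (d * ·) (padicHaar p) = ‖d‖₊⁻¹ • padicHaar p) :
    Measure.map (c * d * ·) (padicHaar p) = ‖c * d‖₊⁻¹ • padicHaar p := by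
  have h : ((c * d) * · : ℚ_[p] → ℚ_[p]) = (c * ·) ∘ (d * ·) := by
    ext x; simp [mul_assoc]
  rw [h, ← Measure.map_map (measurable_const_mul c) (measurable_const_mul d), hd,
    Measure.map_smul, hc, smul_smul, nnnorm_mul, mul_inv, mul_comm]

theorem map_mul_padicHaar_inv {c : ℚ_[p]} (hc0 : c ≠ 0)
    (hc : Measure.map (c * ·) (padicHaar p) = ‖c‖₊⁻¹ • padicHaar p) :
    Measure.map (c⁻¹ * ·) (padicHaar p) = ‖c⁻¹‖₊⁻¹ • padicHaar p := by
  have h : padicHaar p = ‖c‖₊ • Measure.map (c * ·) (padicHaar p) := by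
    rw [hc, smul_smul, mul_inv_cancel₀ (by simpa using hc0), one_smul]
  nth_rw 1 [h]
  rw [Measure.map_smul, Measure.map_map (measurable_const_mul _) (measurable_const_mul _)]
  have h' : (c⁻¹ * ·) ∘ (c * ·) = (id : ℚ_[p] → ℚ_[p]) := by
    ext x; simp [hc0]
  rw [h', Measure.map_id, nnnorm_inv, inv_inv]

theorem map_mul_padicHaar_of_norm_eq_one {c : ℚ_[p]} (hc : ‖c‖ = 1) :
    Measure.map (c * ·) (padicHaar p) = ‖c‖₊⁻¹ • padicHaar p := by
  have hc0 : c ≠ 0 := norm_ne_zero_iff.1 (by rw [hc]; exact one_ne_zero)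
  obtain ⟨k, hk⟩ := exists_map_mul_padicHaar hc0
  have h1 : Measure.map (c * ·) (padicHaar p) (Metric.closedBall 0 1) = 1 := by
    rw [Measure.map_apply (measurable_const_mul c) Metric.isClosed_closedBall.measurableSet,
      ← padicHaar_closedBall_one (p := p)]
    congr 1
    ext x
    simp [hc]
  rw [hk, Measure.smul_apply, padicHaar_closedBall_one] at h1
  have hk1 : k = 1 := by
    rw [ENNReal.smul_def, smul_eq_mul, mul_one] at h1
    exact_mod_cast h1
  have hn : ‖c‖₊ = 1 := NNReal.eq hc
  rw [hk, hk1, hn, inv_one]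

theorem map_prime_mul_padicHaar :
    Measure.map ((p : ℚ_[p]) * ·) (padicHaar p) = ‖(p : ℚ_[p])‖₊⁻¹ • padicHaar p := by
  have hp0 : (0 : ℝ) < p := by exact_mod_cast hp.out.pos
  have hpe : (p : ℝ≥0∞) ≠ 0 := by exact_mod_cast hp.out.ne_zero
  obtain ⟨k, hk⟩ := exists_map_mul_padicHaar (p := p) (c := p)
    (by exact_mod_cast hp.out.ne_zero)
  have h1 : Measure.map ((p : ℚ_[p]) * ·) (padicHaar p) (Metric.closedBall 0 (p : ℝ)⁻¹) = 1 := by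
    rw [Measure.map_apply (measurable_const_mul _) Metric.isClosed_closedBall.measurableSet,
      ← padicHaar_closedBall_one (p := p)]
    congr 1
    ext x
    simp only [Set.mem_preimage, Metric.mem_closedBall, dist_zero_right, norm_mul, Padic.norm_p]
    exact mul_le_iff_le_one_right (inv_pos.2 hp0)
  rw [hk, Measure.smul_apply, padicHaar_closedBall_inv, ENNReal.smul_def, smul_eq_mul] at h1
  have hk1 : k = p := by
    have := ENNReal.eq_inv_of_mul_eq_one_left h1
    rw [inv_inv] at this
    exact_mod_cast this
  have hn : ‖(p : ℚ_[p])‖₊ = (p : ℝ≥0)⁻¹ := NNReal.eq (by simp)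
  rw [hk, hk1, hn, inv_inv]

/-- Multiplication by `c ≠ 0` multiplies the Haar measure by `‖c‖⁻¹`. -/
theorem map_mul_padicHaar {c : ℚ_[p]} (hc : c ≠ 0) :
    Measure.map (c * ·) (padicHaar p) = ‖c‖₊⁻¹ • padicHaar p := by
  have hp0 : (p : ℚ_[p]) ≠ 0 := by exact_mod_cast hp.out.ne_zero
  have hpow : ∀ n : ℕ, Measure.map (((p : ℚ_[p]) ^ n) * ·) (padicHaar p) =
      ‖(p : ℚ_[p]) ^ n‖₊⁻¹ • padicHaar p := by
    intro n
    induction n with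
    | zero => exact map_mul_padicHaar_of_norm_eq_one (by simp)
    | succ n ih => rw [pow_succ]; exact map_mul_padicHaar_mul ih map_prime_mul_padicHaar
  have hzpow : ∀ n : ℤ, Measure.map (((p : ℚ_[p]) ^ n) * ·) (padicHaar p) =
      ‖(p : ℚ_[p]) ^ n‖₊⁻¹ • padicHaar p := by
    intro n
    obtain ⟨m, rfl | rfl⟩ := n.eq_nat_or_neg
    · simpa using hpow m
    · simpa using map_mul_padicHaar_inv (pow_ne_zero m hp0) (hpow m)
  have hdec : c = (c * (p : ℚ_[p]) ^ (-c.valuation)) * (p : ℚ_[p]) ^ c.valuation := by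
    rw [mul_assoc, ← zpow_add₀ hp0]; simp
  have hunit : ‖c * (p : ℚ_[p]) ^ (-c.valuation)‖ = 1 := by
    rw [norm_mul, Padic.norm_p_zpow, neg_neg, Padic.norm_eq_zpow_neg_valuation hc,
      ← zpow_add₀ (by exact_mod_cast hp.out.ne_zero)]
    simp
  rw [hdec]
  exact map_mul_padicHaar_mul (map_mul_padicHaar_of_norm_eq_one hunit) (hzpow _)

theorem lintegral_comp_mul_padicHaar {c : ℚ_[p]} (hc : c ≠ 0) (f : ℚ_[p] → ℝ≥0∞) :
    ∫⁻ x, f (c * x) ∂(padicHaar p) = (‖c‖₊⁻¹ : ℝ≥0) * ∫⁻ x, f x ∂(padicHaar p) := by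
  have h : MeasurableEmbedding (c * ·) := measurableEmbedding_mulLeft₀ hc
  rw [← h.lintegral_map, map_mul_padicHaar hc, lintegral_smul_measure, ENNReal.smul_def,
    smul_eq_mul]

end Haar

section Inversion

variable {p : ℕ} [hp : Fact p.Prime]

/-- The multiplicative Haar measure `‖x‖⁻¹ dx` on `ℚ_[p]`. -/
def padicMulHaar (p : ℕ) [Fact p.Prime] : Measure ℚ_[p] :=
  (padicHaar p).withDensity fun x => ((‖x‖₊⁻¹ : ℝ≥0) : ℝ≥0∞)

instance padicMulHaar_sigmaFinite : SigmaFinite (padicMulHaar p) :=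
  SigmaFinite.withDensity (μ := padicHaar p) fun x => ‖x‖₊⁻¹

theorem measurable_nnnorm_inv_padic : Measurable fun x : ℚ_[p] => ((‖x‖₊⁻¹ : ℝ≥0) : ℝ≥0∞) := by
  fun_prop

theorem lintegral_padicMulHaar {f : ℚ_[p] → ℝ≥0∞} (hf : Measurable f) :
    ∫⁻ x, f x ∂(padicMulHaar p) = ∫⁻ x, ((‖x‖₊⁻¹ : ℝ≥0) : ℝ≥0∞) * f x ∂(padicHaar p) :=
  lintegral_withDensity_eq_lintegral_mul _ measurable_nnnorm_inv_padic hf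

theorem ae_ne_zero_padicHaar : ∀ᵐ x ∂(padicHaar p), x ≠ 0 := by
  rw [ae_iff]
  simp

theorem ae_ne_zero_padicMulHaar : ∀ᵐ x ∂(padicMulHaar p), x ≠ 0 :=
  (withDensity_absolutelyContinuous _ _).ae_le ae_ne_zero_padicHaar

theorem lintegral_comp_mul_padicMulHaar {c : ℚ_[p]} (hc : c ≠ 0) {f : ℚ_[p] → ℝ≥0∞}
    (hf : Measurable f) :
    ∫⁻ x, f (c * x) ∂(padicMulHaar p) = ∫⁻ x, f x ∂(padicMulHaar p) := by
  have hn : ‖c‖₊ ≠ 0 := by simpa using hc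
  rw [lintegral_padicMulHaar hf, lintegral_padicMulHaar (f := fun x => f (c * x)) (by fun_prop)]
  have h := lintegral_comp_mul_padicHaar hc fun x => ((‖x‖₊⁻¹ : ℝ≥0) : ℝ≥0∞) * f x
  have hc' : ∀ x : ℚ_[p], ((‖x‖₊⁻¹ : ℝ≥0) : ℝ≥0∞) * f (c * x) =
      (‖c‖₊ : ℝ≥0∞) * (((‖c * x‖₊⁻¹ : ℝ≥0) : ℝ≥0∞) * f (c * x)) := by
    intro x
    rw [← mul_assoc, ← ENNReal.coe_mul, nnnorm_mul, mul_inv, mul_inv_cancel_left₀ hn]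
  simp_rw [hc']
  rw [lintegral_const_mul' _ _ ENNReal.coe_ne_top, h, ← mul_assoc, ← ENNReal.coe_mul,
    mul_inv_cancel₀ hn, ENNReal.coe_one, one_mul]

theorem measurableSet_padic_sphere : MeasurableSet (Metric.sphere (0 : ℚ_[p]) 1) :=
  Metric.isClosed_sphere.measurableSet

theorem padicMulHaar_sphere_ne_top : padicMulHaar p (Metric.sphere 0 1) ≠ ⊤ := by
  rw [padicMulHaar, withDensity_apply _ measurableSet_padic_sphere,
    setLIntegral_congr_fun (g := fun _ => 1) measurableSet_padic_sphere]
  · simp only [lintegral_const, one_mul, Measure.restrict_apply MeasurableSet.univ, Set.univ_inter]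
    refine ne_top_of_le_ne_top ?_ (measure_mono Metric.sphere_subset_closedBall)
    rw [padicHaar_closedBall_one]
    exact ENNReal.one_ne_top
  · intro x hx
    have : ‖x‖₊ = 1 := NNReal.eq (by simpa using hx)
    simp [this]

theorem padicMulHaar_sphere_ne_zero : padicMulHaar p (Metric.sphere 0 1) ≠ 0 := by
  intro h
  rw [padicMulHaar, withDensity_apply_eq_zero' measurable_nnnorm_inv_padic.aemeasurable] at h
  have hsub : Metric.ball (1 : ℚ_[p]) 1 ⊆
      {x | ((‖x‖₊⁻¹ : ℝ≥0) : ℝ≥0∞) ≠ 0} ∩ Metric.sphere 0 1 := by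
    intro x hx
    have hx1 : ‖x‖ = 1 := by
      have h1 : ‖x - 1‖ < ‖(1 : ℚ_[p])‖ := by simpa [dist_eq_norm] using hx
      have := IsUltrametricDist.norm_add_eq_max_of_norm_ne_norm h1.ne
      rw [sub_add_cancel, max_eq_right h1.le] at this
      simpa using this
    refine ⟨?_, by simpa using hx1⟩
    have : ‖x‖₊ = 1 := NNReal.eq hx1
    rw [Set.mem_ofPred_eq, this]
    simp
  exact (Metric.measure_ball_pos (padicHaar p) 1 one_pos).ne' (measure_mono_null hsub h)

/-- The multiplicative Haar measure is invariant under inversion. -/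
theorem lintegral_comp_inv_padicMulHaar {f : ℚ_[p] → ℝ≥0∞} (hf : Measurable f) :
    ∫⁻ x, f x⁻¹ ∂(padicMulHaar p) = ∫⁻ x, f x ∂(padicMulHaar p) := by
  set m := padicMulHaar p
  let g : ℚ_[p] → ℝ≥0∞ := (Metric.sphere 0 1).indicator 1
  have hg : Measurable g := measurable_one.indicator measurableSet_padic_sphere
  have hgi : ∫⁻ x, g x ∂m = m (Metric.sphere 0 1) :=
    lintegral_indicator_one measurableSet_padic_sphere
  refine (ENNReal.mul_left_inj (c := ∫⁻ x, g x ∂m) (by rw [hgi]; exact padicMulHaar_sphere_ne_zero)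
    (by rw [hgi]; exact padicMulHaar_sphere_ne_top)).1 ?_
  calc (∫⁻ x, f x⁻¹ ∂m) * ∫⁻ y, g y ∂m
      = ∫⁻ x, ∫⁻ y, f x⁻¹ * g (x * y) ∂m ∂m := by
        rw [← lintegral_mul_const _ (by fun_prop)]
        refine lintegral_congr_ae ?_
        filter_upwards [ae_ne_zero_padicMulHaar] with x hx
        rw [lintegral_const_mul _ (by fun_prop), lintegral_comp_mul_padicMulHaar hx hg]
    _ = ∫⁻ y, ∫⁻ x, f x⁻¹ * g (x * y) ∂m ∂m :=
        lintegral_lintegral_swap (Measurable.aemeasurable (by fun_prop))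
    _ = ∫⁻ y, ∫⁻ x, f (x⁻¹ * y) * g x ∂m ∂m := by
        refine lintegral_congr_ae ?_
        filter_upwards [ae_ne_zero_padicMulHaar] with y hy
        rw [← lintegral_comp_mul_padicMulHaar (inv_ne_zero hy) (by fun_prop)]
        refine lintegral_congr fun x => ?_
        rw [mul_inv, inv_inv, mul_comm y, mul_comm y⁻¹ x, inv_mul_cancel_right₀ hy]
    _ = ∫⁻ x, ∫⁻ y, f (x⁻¹ * y) * g x ∂m ∂m :=
        lintegral_lintegral_swap (Measurable.aemeasurable (by fun_prop))
    _ = (∫⁻ x, f x ∂m) * ∫⁻ y, g y ∂m := by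
        rw [← lintegral_const_mul _ hg]
        refine lintegral_congr_ae ?_
        filter_upwards [ae_ne_zero_padicMulHaar] with x hx
        rw [lintegral_mul_const _ (by fun_prop),
          lintegral_comp_mul_padicMulHaar (inv_ne_zero hx) hf]

/-- The change of variables `x ↦ x⁻¹` on `ℚ_[p]`. -/
theorem lintegral_comp_inv_padicHaar {f : ℚ_[p] → ℝ≥0∞} (hf : Measurable f) :
    ∫⁻ x, ((‖x‖₊⁻¹ ^ 2 : ℝ≥0) : ℝ≥0∞) * f x⁻¹ ∂(padicHaar p) = ∫⁻ x, f x ∂(padicHaar p) := by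
  have h := lintegral_comp_inv_padicMulHaar (p := p) (f := fun x => (‖x‖₊ : ℝ≥0∞) * f x)
    (by fun_prop)
  rw [lintegral_padicMulHaar (by fun_prop), lintegral_padicMulHaar (by fun_prop)] at h
  convert! h using 1
  · refine lintegral_congr fun x => ?_
    rw [← mul_assoc, ← ENNReal.coe_mul, sq, nnnorm_inv]
  · refine lintegral_congr_ae ?_
    filter_upwards [ae_ne_zero_padicHaar] with x hx
    rw [← mul_assoc, ← ENNReal.coe_mul, inv_mul_cancel₀ (by simpa using hx), ENNReal.coe_one,
      one_mul]

/-- The change of variables `x ↦ (p x)⁻¹`, exchanging the complement of `ℤ_[p]` with `ℤ_[p]`. -/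
theorem measurePreserving_prime_mul_inv :
    MeasurePreserving (fun x : ℚ_[p] => (p * x)⁻¹)
      ((padicHaar p).withDensity fun x => ((p * ‖x‖₊⁻¹ ^ 2 : ℝ≥0) : ℝ≥0∞)) (padicHaar p) := by
  have hp0 : (p : ℚ_[p]) ≠ 0 := by exact_mod_cast hp.out.ne_zero
  have hpn : (p : ℝ≥0) ≠ 0 := by exact_mod_cast hp.out.ne_zero
  have hn : ‖(p : ℚ_[p])‖₊ = (p : ℝ≥0)⁻¹ := NNReal.eq (by simp)
  have hm : Measurable fun x : ℚ_[p] => (p * x)⁻¹ := by fun_prop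
  refine ⟨hm, ?_⟩
  ext t ht
  have hind : Measurable (t.indicator (1 : ℚ_[p] → ℝ≥0∞)) := measurable_one.indicator ht
  rw [Measure.map_apply hm ht, withDensity_apply _ (hm ht), ← lintegral_indicator (hm ht),
    ← lintegral_indicator_one ht, ← lintegral_comp_inv_padicHaar hind]
  have h := lintegral_comp_mul_padicHaar hp0
    fun x => ((‖x‖₊⁻¹ ^ 2 : ℝ≥0) : ℝ≥0∞) * t.indicator 1 x⁻¹
  rw [hn, inv_inv] at h
  rw [← ENNReal.mul_right_inj (a := (p : ℝ≥0)) (by exact_mod_cast hpn) ENNReal.coe_ne_top, ← h,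
    ← lintegral_const_mul' _ _ ENNReal.coe_ne_top]
  refine lintegral_congr fun x => ?_
  by_cases hx : (p * x)⁻¹ ∈ t
  · rw [Set.indicator_of_mem (by exact hx), Set.indicator_of_mem hx, Pi.one_apply, mul_one,
      ← ENNReal.coe_mul, nnnorm_mul, hn]
    congr 1
    field_simp
  · rw [Set.indicator_of_notMem (by exact hx), Set.indicator_of_notMem hx, mul_zero, mul_zero]

/-- Multiplication by `c ≠ 0` as a measure-preserving map from a multiple of Haar measure. -/
theorem measurePreserving_mul {c : ℚ_[p]} (hc : c ≠ 0) :
    MeasurePreserving (c * ·) ((padicHaar p).withDensity fun _ => (‖c‖₊ : ℝ≥0∞))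
      (padicHaar p) := by
  refine ⟨measurable_const_mul c, ?_⟩
  rw [withDensity_const, Measure.map_smul, map_mul_padicHaar hc, ← ENNReal.smul_def, smul_smul,
    mul_inv_cancel₀ (by simpa using hc), one_smul]

/-- A coordinatewise change of variables. -/
theorem MeasureTheory.MeasurePreserving.padicPi {ι : Type} [Fintype ι] {φ : ℚ_[p] → ℚ_[p]}
    {w : ℚ_[p] → ℝ≥0} (hw : Measurable w)
    (h : MeasurePreserving φ ((padicHaar p).withDensity fun x => (w x : ℝ≥0∞)) (padicHaar p)) :
    MeasurePreserving (fun (x : ι → ℚ_[p]) i => φ (x i))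
      ((padicPi p ι).withDensity fun x => ((∏ i, w (x i) : ℝ≥0) : ℝ≥0∞)) (padicPi p ι) := by
  rw [_root_.padicPi, ← pi_withDensity hw]
  have := SigmaFinite.withDensity (μ := padicHaar p) w
  exact measurePreserving_pi _ _ fun _ => h

end Inversion

section Pairs

theorem mem_pairsIn {A : Finset ℕ} {q : ℕ × ℕ} :
    q ∈ pairsIn A ↔ (q.1 ∈ A ∧ q.2 ∈ A) ∧ q.1 < q.2 := by
  simp [pairsIn]

@[simp]
theorem pairsIn_singleton (v : ℕ) : pairsIn {v} = ∅ := by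
  ext q
  simp only [mem_pairsIn, mem_singleton, notMem_empty, iff_false]
  omega

/-- A product over the pairs in a disjoint union splits into the pairs in either part and the
mixed pairs. -/
@[to_additive]
theorem prod_pairsIn_union {M : Type*} [CommMonoid M] {U V : Finset ℕ} (hUV : Disjoint U V)
    {h : ℕ → ℕ → M} (hsymm : ∀ i j, h i j = h j i) :
    ∏ q ∈ pairsIn (U ∪ V), h q.1 q.2 =
      (∏ q ∈ pairsIn U, h q.1 q.2) * (∏ q ∈ pairsIn V, h q.1 q.2) *
        ∏ i ∈ U, ∏ j ∈ V, h i j := by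
  have hcross : ∏ i ∈ U, ∏ j ∈ V, h i j =
      (∏ i ∈ U, ∏ j ∈ V, if i < j then h i j else 1) *
        ∏ i ∈ V, ∏ j ∈ U, if i < j then h i j else 1 := by
    rw [prod_comm (s := V), ← prod_mul_distrib]
    refine prod_congr rfl fun i hi => ?_
    rw [← prod_mul_distrib]
    refine prod_congr rfl fun j hj => ?_
    have hne : i ≠ j := fun e => disjoint_left.1 hUV hi (e ▸ hj)
    rcases lt_or_gt_of_ne hne with hlt | hlt
    · simp [hlt, hlt.le]
    · simp [hlt, hlt.le, hsymm i j]
  simp only [pairsIn, prod_filter, prod_product, prod_union hUV, prod_mul_distrib, hcross]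
  ac_rfl

end Pairs

section Coordinates

variable {p : ℕ} [hp : Fact p.Prime]

theorem padicCoord_of_mem {A : Finset ℕ} (x : A → ℚ_[p]) {n : ℕ} (hn : n ∈ A) :
    padicCoord x n = x ⟨n, hn⟩ := dif_pos hn

@[simp]
theorem padicCoord_coe {A : Finset ℕ} (x : A → ℚ_[p]) (i : A) : padicCoord x i = x i :=
  padicCoord_of_mem x i.2

@[fun_prop]
theorem measurable_padicCoord {A : Finset ℕ} (n : ℕ) :
    Measurable fun x : A → ℚ_[p] => padicCoord x n := by
  unfold padicCoord
  split_ifs <;> fun_prop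

/-- Restriction of the coordinates to the index sets `U` and `V`. -/
def padicSplit {A : Finset ℕ} (U V : Finset ℕ) (x : A → ℚ_[p]) :
    (U → ℚ_[p]) × (V → ℚ_[p]) :=
  (fun i => padicCoord x i, fun j => padicCoord x j)

theorem padicSplit_eq {U V : Finset ℕ} (hUV : Disjoint U V) :
    (padicSplit U V : (↥(U ∪ V) → ℚ_[p]) → _) =
      (MeasurableEquiv.piFinsetUnion (fun _ : ℕ => ℚ_[p]) hUV).symm := by
  ext x i
  · exact padicCoord_of_mem x (mem_union_left V i.2)
  · exact padicCoord_of_mem x (mem_union_right U i.2)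

theorem measurePreserving_padicSplit {A U V : Finset ℕ} (hA : U ∪ V = A) (hUV : Disjoint U V) :
    MeasurePreserving (padicSplit U V) (padicPi p A) ((padicPi p U).prod (padicPi p V)) := by
  subst hA
  rw [padicSplit_eq hUV]
  exact (measurePreserving_piFinsetUnion hUV fun _ => padicHaar p).symm

theorem measurableEmbedding_padicSplit {A U V : Finset ℕ} (hA : U ∪ V = A)
    (hUV : Disjoint U V) :
    MeasurableEmbedding (padicSplit U V : (A → ℚ_[p]) → _) := by
  subst hA
  rw [padicSplit_eq hUV]
  exact MeasurableEquiv.measurableEmbedding _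

theorem padicCoord_padicSplit_fst {A U V : Finset ℕ} (x : A → ℚ_[p]) {i : ℕ} (hi : i ∈ U) :
    padicCoord (padicSplit U V x).1 i = padicCoord x i := padicCoord_of_mem _ hi

theorem padicCoord_padicSplit_snd {A U V : Finset ℕ} (x : A → ℚ_[p]) {i : ℕ} (hi : i ∈ V) :
    padicCoord (padicSplit U V x).2 i = padicCoord x i := padicCoord_of_mem _ hi

/-- The polydisc `ℤ_p^A`. -/
def zpBall (p : ℕ) [Fact p.Prime] (A : Finset ℕ) : Set (A → ℚ_[p]) := {x | ∀ i, ‖x i‖ ≤ 1}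

theorem zpBall_eq_pi (A : Finset ℕ) :
    zpBall p A = Set.univ.pi fun _ => Metric.closedBall 0 1 := by
  ext x
  simp [zpBall]

theorem measurableSet_zpBall (A : Finset ℕ) : MeasurableSet (zpBall p A) := by
  rw [zpBall_eq_pi]
  exact MeasurableSet.univ_pi fun _ => Metric.isClosed_closedBall.measurableSet

theorem padicPi_zpBall (A : Finset ℕ) : padicPi p A (zpBall p A) = 1 := by
  rw [zpBall_eq_pi, padicPi, Measure.pi_pi]
  simp [padicHaar_closedBall_one]

theorem mem_zpBall_iff {A : Finset ℕ} {x : A → ℚ_[p]} :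
    x ∈ zpBall p A ↔ ∀ i ∈ A, ‖padicCoord x i‖ ≤ 1 := by
  constructor
  · intro h i hi
    rw [padicCoord_of_mem x hi]
    exact h _
  · intro h i
    simpa using h i i.2

end Coordinates

section KobaNielsen

variable {p : ℕ} [hp : Fact p.Prime]

/-- The absolute value of the Koba–Nielsen integrand with real exponents. -/
def kobaNielsen (a a' : ℕ → ℝ) (b : ℕ → ℕ → ℝ) (A : Finset ℕ) (y : ℕ → ℚ_[p]) : ℝ≥0 :=
  (∏ i ∈ A, ‖y i‖₊ ^ a i * ‖1 - y i‖₊ ^ a' i) * ∏ q ∈ pairsIn A, ‖y q.1 - y q.2‖₊ ^ b q.1 q.2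

/-- The integral over `ℤ_p^A` of the absolute value of the Koba–Nielsen integrand. -/
def kobaNielsenIntegral (p : ℕ) [Fact p.Prime] (a a' : ℕ → ℝ) (b : ℕ → ℕ → ℝ) (A : Finset ℕ) :
    ℝ≥0∞ :=
  ∫⁻ x in zpBall p A, (kobaNielsen a a' b A (padicCoord x) : ℝ≥0∞) ∂(padicPi p A)

variable {a a' : ℕ → ℝ} {b : ℕ → ℕ → ℝ} {A U V : Finset ℕ}

theorem measurable_kobaNielsen (a a' : ℕ → ℝ) (b : ℕ → ℕ → ℝ) (A B : Finset ℕ) :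
    Measurable fun x : A → ℚ_[p] => (kobaNielsen a a' b B (padicCoord x) : ℝ≥0∞) := by
  unfold kobaNielsen
  fun_prop

theorem kobaNielsen_congr {y z : ℕ → ℚ_[p]} (h : ∀ i ∈ A, y i = z i) :
    kobaNielsen a a' b A y = kobaNielsen a a' b A z := by
  unfold kobaNielsen
  congr 1
  · exact prod_congr rfl fun i hi => by rw [h i hi]
  · refine prod_congr rfl fun q hq => ?_
    rw [mem_pairsIn] at hq
    rw [h _ hq.1.1, h _ hq.1.2]

theorem kobaNielsen_union (hb : ∀ i j, b i j = b j i) (hUV : Disjoint U V) (y : ℕ → ℚ_[p]) :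
    kobaNielsen a a' b (U ∪ V) y = kobaNielsen a a' b U y * kobaNielsen a a' b V y *
      ∏ i ∈ U, ∏ j ∈ V, ‖y i - y j‖₊ ^ b i j := by
  unfold kobaNielsen
  rw [prod_union hUV, prod_pairsIn_union (h := fun i j => ‖y i - y j‖₊ ^ b i j) hUV]
  · ring
  · intro i j
    rw [hb i j, ← nnnorm_neg, neg_sub]

theorem norm_sub_eq_of_lt {x y : ℚ_[p]} (h : ‖x‖ < ‖y‖) : ‖x - y‖ = ‖y‖ := by
  have hne : ‖x‖ ≠ ‖-y‖ := by rw [norm_neg]; exact h.ne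
  rw [sub_eq_add_neg, IsUltrametricDist.norm_add_eq_max_of_norm_ne_norm hne, norm_neg,
    max_eq_right h.le]

theorem nnnorm_sub_eq_one_of_lt {x y : ℚ_[p]} (hx : ‖x‖ < 1) (hy : ‖y‖ = 1) :
    ‖x - y‖₊ = 1 :=
  NNReal.eq ((norm_sub_eq_of_lt (hx.trans_eq hy.symm)).trans hy)

/-- The Koba–Nielsen integrand factorizes when the points fall in two groups, the first one
close to `0` and the second one away from `0`. -/
theorem kobaNielsen_union_of_norm (hb : ∀ i j, b i j = b j i) (hUV : Disjoint U V)
    {y : ℕ → ℚ_[p]} (hU : ∀ i ∈ U, ‖y i‖ < 1) (hV : ∀ i ∈ V, ‖y i‖ = 1) :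
    kobaNielsen a a' b (U ∪ V) y = kobaNielsen a 0 b U y * kobaNielsen 0 a' b V y := by
  rw [kobaNielsen_union hb hUV,
    prod_eq_one fun i hi => prod_eq_one fun j hj => by
      rw [nnnorm_sub_eq_one_of_lt (hU i hi) (hV j hj), NNReal.one_rpow], mul_one]
  unfold kobaNielsen
  congr 2
  · refine prod_congr rfl fun i hi => ?_
    rw [← nnnorm_neg (1 - y i), neg_sub, nnnorm_sub_eq_one_of_lt (hU i hi) (by simp)]
    simp
  · refine prod_congr rfl fun i hi => ?_
    have : ‖y i‖₊ = 1 := NNReal.eq (hV i hi)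
    simp [this]

/-- The part of `ℤ_p^A` where exactly the coordinates in `U` have norm less than `1`. -/
def zpPiece (p : ℕ) [Fact p.Prime] (A U : Finset ℕ) : Set (A → ℚ_[p]) :=
  zpBall p A ∩ {x | ∀ i ∈ A, ‖padicCoord x i‖ < 1 ↔ i ∈ U}

theorem mem_zpPiece_filter {x : A → ℚ_[p]} (hx : x ∈ zpBall p A) :
    x ∈ zpPiece p A (A.filter fun i => ‖padicCoord x i‖ < 1) :=
  ⟨hx, fun i hi => by simp [hi]⟩

theorem setLIntegral_zpPiece_le (hb : ∀ i j, b i j = b j i) (hU : U ⊆ A) :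
    ∫⁻ x in zpPiece p A U, (kobaNielsen a a' b A (padicCoord x) : ℝ≥0∞) ∂(padicPi p A) ≤
      kobaNielsenIntegral p a 0 b U * kobaNielsenIntegral p 0 a' b (A \ U) := by
  have hA : U ∪ (A \ U) = A := union_sdiff_of_subset hU
  have hd : Disjoint U (A \ U) := disjoint_sdiff
  let F : (U → ℚ_[p]) × (↥(A \ U) → ℚ_[p]) → ℝ≥0∞ := fun z =>
    (kobaNielsen a 0 b U (padicCoord z.1) : ℝ≥0∞) *
      (kobaNielsen 0 a' b (A \ U) (padicCoord z.2) : ℝ≥0∞)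
  have hsub : zpPiece p A U ⊆
      padicSplit U (A \ U) ⁻¹' (zpBall p U ×ˢ zpBall p (A \ U)) := by
    rintro x ⟨hx, -⟩
    rw [mem_zpBall_iff] at hx
    exact ⟨fun i => hx i (hU i.2), fun i => hx i (sdiff_subset i.2)⟩
  calc ∫⁻ x in zpPiece p A U, (kobaNielsen a a' b A (padicCoord x) : ℝ≥0∞) ∂(padicPi p A)
      ≤ ∫⁻ x in zpPiece p A U, F (padicSplit U (A \ U) x) ∂(padicPi p A) := by
        refine setLIntegral_mono' ?_ ?_
        · refine (measurableSet_zpBall A).inter ?_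
          refine measurableSet_setOfPred.2 ?_
          refine Measurable.forall fun i => Measurable.imp measurable_const ?_
          refine Measurable.iff (measurableSet_setOfPred.1 ?_) measurable_const
          exact measurableSet_lt (by fun_prop) measurable_const
        · rintro x ⟨hx, hxU⟩
          rw [mem_zpBall_iff] at hx
          have h := kobaNielsen_union_of_norm (a := a) (a' := a') hb hd
            (y := padicCoord x) (fun i hi => (hxU i (hU hi)).2 hi) fun i hi => by
              rw [mem_sdiff] at hi
              exact le_antisymm (hx i hi.1) (not_lt.1 fun h => hi.2 ((hxU i hi.1).1 h))
          rw [hA] at h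
          rw [h, ENNReal.coe_mul]
          refine le_of_eq ?_
          simp only [F]
          rw [kobaNielsen_congr fun i hi => padicCoord_padicSplit_fst (V := A \ U) x hi,
            kobaNielsen_congr fun i hi => padicCoord_padicSplit_snd (U := U) x hi]
    _ ≤ ∫⁻ x in padicSplit U (A \ U) ⁻¹' (zpBall p U ×ˢ zpBall p (A \ U)),
          F (padicSplit U (A \ U) x) ∂(padicPi p A) := lintegral_mono_set hsub
    _ = ∫⁻ z in zpBall p U ×ˢ zpBall p (A \ U), F z ∂((padicPi p U).prod (padicPi p ↥(A \ U))) :=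
        (measurePreserving_padicSplit hA hd).setLIntegral_comp_preimage_emb
          (measurableEmbedding_padicSplit hA hd) _ _
    _ = _ := by
        rw [← Measure.prod_restrict]
        exact lintegral_prod_mul (measurable_kobaNielsen _ _ _ _ _).aemeasurable
          (measurable_kobaNielsen _ _ _ _ _).aemeasurable

theorem setLIntegral_le_sum_of_mem_zpPiece (hb : ∀ i j, b i j = b j i) {S : Set (A → ℚ_[p])}
    {P : Finset (Finset ℕ)} (hP : ∀ U ∈ P, U ⊆ A) (hS : ∀ x ∈ S, ∃ U ∈ P, x ∈ zpPiece p A U) :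
    ∫⁻ x in S, (kobaNielsen a a' b A (padicCoord x) : ℝ≥0∞) ∂(padicPi p A) ≤
      ∑ U ∈ P, kobaNielsenIntegral p a 0 b U * kobaNielsenIntegral p 0 a' b (A \ U) := by
  have hS' : S ⊆ ⋃ U : P, zpPiece p A U := fun x hx => by simpa using hS x hx
  refine (lintegral_mono_set hS').trans ((lintegral_iUnion_le _ _).trans ?_)
  rw [tsum_fintype, ← sum_coe_sort P]
  exact sum_le_sum fun U _ => setLIntegral_zpPiece_le hb (hP U U.2)

end KobaNielsen

section Convergence

variable {p : ℕ} [hp : Fact p.Prime] {a a' : ℕ → ℝ} {b : ℕ → ℕ → ℝ} {A : Finset ℕ}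

theorem kobaNielsenIntegral_reflect :
    kobaNielsenIntegral p 0 a' b A = kobaNielsenIntegral p a' 0 b A := by
  have h1 : MeasurePreserving (fun x : ℚ_[p] => 1 - x) (padicHaar p) (padicHaar p) :=
    by simpa [Function.comp_def, sub_eq_add_neg] using
      (measurePreserving_add_left (padicHaar p) 1).comp (Measure.measurePreserving_neg _)
  have hmp : MeasurePreserving (fun (x : A → ℚ_[p]) i => 1 - x i) (padicPi p A) (padicPi p A) :=
    measurePreserving_pi _ _ fun _ => h1
  have hball : (fun (x : A → ℚ_[p]) i => 1 - x i) ⁻¹' zpBall p A = zpBall p A := by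
    have h : ∀ x : ℚ_[p], ‖x‖ ≤ 1 → ‖1 - x‖ ≤ 1 := fun x hx => by
      have := Padic.nonarchimedean 1 (-x)
      rw [norm_neg, ← sub_eq_add_neg, norm_one, max_eq_left hx] at this
      exact this
    ext x
    refine ⟨fun hx i => ?_, fun hx i => h _ (hx i)⟩
    have := h _ (hx i)
    rwa [sub_sub_cancel] at this
  unfold kobaNielsenIntegral
  rw [← hmp.setLIntegral_comp_preimage (measurableSet_zpBall A)
    (measurable_kobaNielsen a' 0 b A A), hball]
  refine lintegral_congr fun x => ?_
  congr 1
  have hc : ∀ i ∈ A, padicCoord (fun i => 1 - x i) i = 1 - padicCoord x i := fun i hi => by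
    rw [padicCoord_of_mem _ hi, padicCoord_of_mem _ hi]
  rw [kobaNielsen_congr hc]
  unfold kobaNielsen
  congr 1
  · exact prod_congr rfl fun i _ => by simp [sub_sub_cancel]
  · refine prod_congr rfl fun q _ => ?_
    rw [sub_sub_sub_cancel_left, ← nnnorm_neg, neg_sub]

/-- One of the points of a translation invariant integral may be moved to the origin. -/
theorem kobaNielsenIntegral_insert_le (hb : ∀ i j, b i j = b j i) {v : ℕ} (hv : v ∉ A) :
    kobaNielsenIntegral p 0 0 b (insert v A) ≤ kobaNielsenIntegral p (b v) 0 b A := by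
  have hU : {v} ∪ A = insert v A := rfl
  have hd : Disjoint {v} A := disjoint_singleton_left.2 hv
  let F : (({v} : Finset ℕ) → ℚ_[p]) × (A → ℚ_[p]) → ℝ≥0∞ := fun z =>
    (kobaNielsen (b v) 0 b A (fun i => padicCoord z.2 i - padicCoord z.1 v) : ℝ≥0∞)
  have hF : Measurable F := by
    simp only [F]
    unfold kobaNielsen
    have h1 : ∀ i, Measurable fun z : (({v} : Finset ℕ) → ℚ_[p]) × (A → ℚ_[p]) =>
      padicCoord z.1 i := fun i => (measurable_padicCoord i).comp measurable_fst
    have h2 : ∀ i, Measurable fun z : (({v} : Finset ℕ) → ℚ_[p]) × (A → ℚ_[p]) =>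
      padicCoord z.2 i := fun i => (measurable_padicCoord i).comp measurable_snd
    fun_prop
  have hpre : zpBall p (insert v A) =
      padicSplit {v} A ⁻¹' (zpBall p {v} ×ˢ zpBall p A) := by
    ext x
    simp only [Set.mem_preimage, Set.mem_prod, mem_zpBall_iff, mem_insert, mem_singleton,
      forall_eq_or_imp, forall_eq]
    rw [padicCoord_padicSplit_fst x (mem_singleton_self v)]
    refine and_congr_right fun _ => forall₂_congr fun i hi => ?_
    rw [padicCoord_padicSplit_snd x hi]
  have hinner : ∀ y ∈ zpBall p {v}, ∫⁻ x in zpBall p A, F (y, x) ∂(padicPi p A) =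
      kobaNielsenIntegral p (b v) 0 b A := by
    intro y hy
    have hy' : ‖padicCoord y v‖ ≤ 1 := mem_zpBall_iff.1 hy v (mem_singleton_self v)
    have hmp : MeasurePreserving (· + (fun _ => padicCoord y v : A → ℚ_[p]))
      (padicPi p A) (padicPi p A) := measurePreserving_add_right _ _
    have hball : (· + (fun _ => padicCoord y v : A → ℚ_[p])) ⁻¹' zpBall p A = zpBall p A := by
      ext x
      refine forall_congr' fun i => ⟨fun h => ?_, fun h => ?_⟩
      · have := Padic.nonarchimedean (x i + padicCoord y v) (-padicCoord y v)
        rw [add_neg_cancel_right, norm_neg] at this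
        exact this.trans (max_le h hy')
      · exact (Padic.nonarchimedean _ _).trans (max_le h hy')
    rw [← hmp.setLIntegral_comp_preimage (measurableSet_zpBall A)
      (f := fun x => F (y, x)) (hF.comp measurable_prodMk_left), hball]
    refine lintegral_congr fun x => ?_
    simp only [F]
    congr 1
    refine kobaNielsen_congr fun i hi => ?_
    rw [padicCoord_of_mem _ hi, padicCoord_of_mem _ hi, Pi.add_apply, add_sub_cancel_right]
  calc kobaNielsenIntegral p 0 0 b (insert v A)
      = ∫⁻ x in padicSplit {v} A ⁻¹' (zpBall p {v} ×ˢ zpBall p A),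
          F (padicSplit {v} A x) ∂(padicPi p ↥(insert v A)) := by
        rw [kobaNielsenIntegral, hpre]
        refine lintegral_congr fun x => ?_
        simp only [F]
        congr 1
        have hcongr : kobaNielsen (b v) 0 b A (fun i => padicCoord (padicSplit {v} A x).2 i -
            padicCoord (padicSplit {v} A x).1 v) =
            kobaNielsen (b v) 0 b A fun i => padicCoord x i - padicCoord x v :=
          kobaNielsen_congr fun i hi => by
            rw [padicCoord_padicSplit_snd x hi, padicCoord_padicSplit_fst x (mem_singleton_self v)]
        refine (kobaNielsen_union hb hd (padicCoord x)).trans ?_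
        rw [hcongr]
        unfold kobaNielsen
        simp only [Pi.zero_apply, NNReal.rpow_zero, mul_one, prod_const_one, one_mul,
          prod_singleton, pairsIn_singleton, prod_empty, sub_sub_sub_cancel_right]
        rw [mul_comm]
        congr 1
        exact prod_congr rfl fun i _ => by rw [← nnnorm_neg, neg_sub]
    _ = ∫⁻ z in zpBall p {v} ×ˢ zpBall p A, F z
          ∂((padicPi p ({v} : Finset ℕ)).prod (padicPi p A)) :=
        (measurePreserving_padicSplit hU hd).setLIntegral_comp_preimage_emb
          (measurableEmbedding_padicSplit hU hd) _ _
    _ = ∫⁻ y in zpBall p {v}, ∫⁻ x in zpBall p A, F (y, x) ∂(padicPi p A)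
          ∂(padicPi p ({v} : Finset ℕ)) := by
        rw [← Measure.prod_restrict, lintegral_prod _ hF.aemeasurable]
    _ = ∫⁻ y in zpBall p {v}, kobaNielsenIntegral p (b v) 0 b A
          ∂(padicPi p ({v} : Finset ℕ)) :=
        setLIntegral_congr_fun (measurableSet_zpBall _) hinner
    _ ≤ _ := by
        rw [setLIntegral_const, padicPi_zpBall, mul_one]

/-- The total degree of homogeneity of the integrand at the origin, including the measure. -/
def homogeneityDegree (a : ℕ → ℝ) (b : ℕ → ℕ → ℝ) (A : Finset ℕ) : ℝ :=
  A.card + ∑ i ∈ A, a i + ∑ q ∈ pairsIn A, b q.1 q.2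

theorem nnreal_rpow_sum {ι : Type*} {x : ℝ≥0} (hx : x ≠ 0) (f : ι → ℝ) (s : Finset ι) :
    x ^ (∑ i ∈ s, f i) = ∏ i ∈ s, x ^ f i := by
  refine NNReal.eq ?_
  push_cast
  exact Real.rpow_sum_of_pos (NNReal.coe_pos.2 (pos_iff_ne_zero.2 hx)) f s

theorem kobaNielsen_mul (c : ℚ_[p]) (hc : c ≠ 0) (y : ℕ → ℚ_[p]) :
    kobaNielsen a 0 b A (fun i => c * y i) =
      ‖c‖₊ ^ (∑ i ∈ A, a i + ∑ q ∈ pairsIn A, b q.1 q.2) * kobaNielsen a 0 b A y := by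
  have hc' : ‖c‖₊ ≠ 0 := by simpa using hc
  unfold kobaNielsen
  simp only [← mul_sub, nnnorm_mul, NNReal.mul_rpow, prod_mul_distrib, Pi.zero_apply,
    NNReal.rpow_zero, mul_one]
  rw [NNReal.rpow_add hc', nnreal_rpow_sum hc', nnreal_rpow_sum hc']
  ring

/-- The points of `ℤ_p^A` of maximum norm `1`. -/
def zpShell (p : ℕ) [Fact p.Prime] (A : Finset ℕ) : Set (A → ℚ_[p]) :=
  zpBall p A ∩ {x | ∃ i, ‖x i‖ = 1}

theorem measurableSet_zpShell : MeasurableSet (zpShell p A) := by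
  refine (measurableSet_zpBall A).inter (measurableSet_setOfPred.2 ?_)
  refine Measurable.exists fun i => measurableSet_setOfPred.1 ?_
  exact measurableSet_eq_fun (by fun_prop) measurable_const

theorem setLIntegral_scaled_zpShell (k : ℕ) :
    ∫⁻ x in {x : A → ℚ_[p] | (fun i => ((p : ℚ_[p]) ^ k)⁻¹ * x i) ∈ zpShell p A},
        (kobaNielsen a 0 b A (padicCoord x) : ℝ≥0∞) ∂(padicPi p A) =
      (((p : ℝ≥0) ^ (-homogeneityDegree a b A) : ℝ≥0) : ℝ≥0∞) ^ k *
      ∫⁻ x in zpShell p A, (kobaNielsen a 0 b A (padicCoord x) : ℝ≥0∞) ∂(padicPi p A) := by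
  have hp0 : (p : ℝ≥0) ≠ 0 := by exact_mod_cast hp.out.ne_zero
  set c : ℚ_[p] := (p : ℚ_[p]) ^ k with hcdef
  have hc : c ≠ 0 := pow_ne_zero _ (by exact_mod_cast hp.out.ne_zero)
  have hcn : ‖c‖₊ = (p : ℝ≥0) ^ (-(k : ℝ)) := by
    refine NNReal.eq ?_
    simp [hcdef, Real.rpow_neg]
  have hmp := (measurePreserving_mul hc).padicPi (ι := A) measurable_const
  have hS : MeasurableSet {x : A → ℚ_[p] | (fun i => c⁻¹ * x i) ∈ zpShell p A} :=
    measurableSet_zpShell.preimage (by fun_prop)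
  have hpre : (fun (x : A → ℚ_[p]) i => c * x i) ⁻¹'
      {x : A → ℚ_[p] | (fun i => c⁻¹ * x i) ∈ zpShell p A} = zpShell p A := by
    ext x
    simp [inv_mul_cancel_left₀ hc]
  rw [← hmp.setLIntegral_comp_preimage hS (measurable_kobaNielsen a 0 b A A), hpre,
    withDensity_const, Measure.restrict_smul, lintegral_smul_measure]
  have hF : ∀ x : A → ℚ_[p], (kobaNielsen a 0 b A (padicCoord fun i => c * x i) : ℝ≥0∞) =
      ((‖c‖₊ ^ (∑ i ∈ A, a i + ∑ q ∈ pairsIn A, b q.1 q.2) : ℝ≥0) : ℝ≥0∞) *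
        (kobaNielsen a 0 b A (padicCoord x) : ℝ≥0∞) := fun x => by
    rw [← ENNReal.coe_mul, ← kobaNielsen_mul c hc, kobaNielsen_congr fun i hi => ?_]
    rw [padicCoord_of_mem _ hi, padicCoord_of_mem _ hi]
  simp_rw [hF]
  rw [lintegral_const_mul' _ _ ENNReal.coe_ne_top, smul_eq_mul, ← mul_assoc, ← ENNReal.coe_mul,
    ← ENNReal.coe_pow]
  congr 2
  rw [prod_const, card_univ, Fintype.card_coe, ← NNReal.rpow_natCast, ← NNReal.rpow_natCast,
    ← NNReal.rpow_add (by simpa using hc), hcn, ← NNReal.rpow_mul, ← NNReal.rpow_mul]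
  congr 1
  rw [homogeneityDegree]
  ring

theorem exists_mem_zpShell {x : A → ℚ_[p]} (hx : x ∈ zpBall p A) (hx0 : x ≠ 0) :
    ∃ k : ℕ, (fun i => ((p : ℚ_[p]) ^ k)⁻¹ * x i) ∈ zpShell p A := by
  obtain ⟨j, hj⟩ := Function.ne_iff.1 hx0
  have : Nonempty A := ⟨j⟩
  have hp0 : (0 : ℝ) < p := by exact_mod_cast hp.out.pos
  obtain ⟨i, hi⟩ := Finite.exists_max fun i => ‖x i‖
  have hi0 : x i ≠ 0 := norm_pos_iff.1 ((norm_pos_iff.2 hj).trans_le (hi j))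
  have hval : 0 ≤ (x i).valuation := (Padic.norm_le_one_iff_val_nonneg _).1 (hx i)
  obtain ⟨k, hk⟩ := Int.eq_ofNat_of_zero_le hval
  have hn : ‖((p : ℚ_[p]) ^ k)⁻¹‖ * ‖x i‖ = 1 := by
    rw [Padic.norm_eq_zpow_neg_valuation hi0, hk, norm_inv, norm_pow, Padic.norm_p]
    simp [hp0.ne']
  refine ⟨k, fun l => ?_, i, by rw [norm_mul, hn]⟩
  rw [norm_mul, ← hn]
  exact mul_le_mul_of_nonneg_left (hi l) (norm_nonneg _)

theorem kobaNielsenIntegral_lt_top_of_shell (hA : A.Nonempty)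
    (hd : 0 < homogeneityDegree a b A)
    (h : ∫⁻ x in zpShell p A, (kobaNielsen a 0 b A (padicCoord x) : ℝ≥0∞) ∂(padicPi p A) < ⊤) :
    kobaNielsenIntegral p a 0 b A < ⊤ := by
  have : Nonempty A := hA.to_subtype
  have hp1 : (1 : ℝ≥0) < p := by exact_mod_cast hp.out.one_lt
  have hzero : padicPi p A {0} = 0 := by
    rw [← Set.univ_pi_singleton, padicPi, Measure.pi_pi]
    simp [hA.ne_empty]
  have hsub : zpBall p A ⊆ {0} ∪ ⋃ k : ℕ,
      {x : A → ℚ_[p] | (fun i => ((p : ℚ_[p]) ^ k)⁻¹ * x i) ∈ zpShell p A} := by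
    intro x hx
    by_cases hx0 : x = 0
    · exact Or.inl hx0
    · exact Or.inr (Set.mem_iUnion.2 (exists_mem_zpShell hx hx0))
  refine (lintegral_mono_set hsub).trans_lt ((lintegral_union_le _ _ _).trans_lt ?_)
  rw [setLIntegral_measure_zero _ _ hzero, zero_add]
  refine (lintegral_iUnion_le _ _).trans_lt ?_
  simp_rw [setLIntegral_scaled_zpShell]
  rw [ENNReal.tsum_mul_right, ENNReal.tsum_geometric]
  refine ENNReal.mul_lt_top (ENNReal.inv_lt_top.2 (tsub_pos_of_lt ?_)) h
  exact_mod_cast NNReal.rpow_lt_one_of_one_lt_of_neg hp1 (neg_lt_zero.2 hd)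

theorem sum_pairsIn_insert (hb : ∀ i j, b i j = b j i) {v : ℕ} (hv : v ∉ A) :
    ∑ q ∈ pairsIn (insert v A), b q.1 q.2 = ∑ i ∈ A, b v i + ∑ q ∈ pairsIn A, b q.1 q.2 := by
  have h := sum_pairsIn_union (disjoint_singleton_left.2 hv) hb
  rw [pairsIn_singleton, sum_empty, sum_singleton, zero_add, add_comm] at h
  exact h

/-- Convergence of the Koba–Nielsen integral with one fixed point. -/
theorem kobaNielsenIntegral_lt_top (hb : ∀ i j, b i j = b j i)
    (h2 : ∀ J ⊆ A, 2 ≤ J.card → (0 : ℝ) < J.card - 1 + ∑ q ∈ pairsIn J, b q.1 q.2)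
    (h1 : ∀ J ⊆ A, J.Nonempty → 0 < homogeneityDegree a b J) :
    kobaNielsenIntegral p a 0 b A < ⊤ := by
  induction A using Finset.strongInduction generalizing a with
  | H A ih =>
    rcases A.eq_empty_or_nonempty with rfl | hA
    · simp [kobaNielsenIntegral, kobaNielsen, pairsIn, padicPi_zpBall]
    refine kobaNielsenIntegral_lt_top_of_shell hA (h1 A Subset.rfl hA) ?_
    refine (setLIntegral_le_sum_of_mem_zpPiece (P := A.ssubsets) hb
      (fun U hU => (mem_ssubsets.1 hU).subset)
      fun x hx => ⟨_, ?_, mem_zpPiece_filter hx.1⟩).trans_lt ?_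
    · obtain ⟨i, hi⟩ := hx.2
      refine mem_ssubsets.2 (filter_ssubset.2 ⟨i, i.2, ?_⟩)
      rw [padicCoord_coe, hi]
      exact lt_irrefl _
    refine ENNReal.sum_lt_top.2 fun U hU => ENNReal.mul_lt_top ?_ ?_
    · have hU := mem_ssubsets.1 hU
      exact ih U hU (fun J hJ => h2 J (hJ.trans hU.subset)) fun J hJ => h1 J (hJ.trans hU.subset)
    · obtain ⟨v, hvA, hvU⟩ := exists_of_ssubset (mem_ssubsets.1 hU)
      have hv : v ∈ A \ U := mem_sdiff.2 ⟨hvA, hvU⟩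
      have hsub : (A \ U).erase v ⊆ A := (erase_subset _ _).trans sdiff_subset
      rw [← insert_erase hv]
      refine (kobaNielsenIntegral_insert_le hb (notMem_erase _ _)).trans_lt ?_
      refine ih _ ⟨hsub, fun h => notMem_erase v _ (h hvA)⟩ (fun J hJ => h2 J (hJ.trans hsub))
        fun J hJ hJne => ?_
      have hvJ : v ∉ J := fun h => notMem_erase v _ (hJ h)
      have := h2 (insert v J) (insert_subset hvA (hJ.trans hsub))
        (by rw [card_insert_of_notMem hvJ]; have := hJne.card_pos; omega)
      rw [card_insert_of_notMem hvJ, sum_pairsIn_insert hb hvJ] at this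
      rw [homogeneityDegree]
      push_cast at this
      linarith

/-- Convergence of the Koba–Nielsen integral with two fixed points. -/
theorem kobaNielsenIntegral_two_lt_top (hb : ∀ i j, b i j = b j i)
    (h2 : ∀ J ⊆ A, 2 ≤ J.card → (0 : ℝ) < J.card - 1 + ∑ q ∈ pairsIn J, b q.1 q.2)
    (h0 : ∀ J ⊆ A, J.Nonempty → 0 < homogeneityDegree a b J)
    (h1 : ∀ J ⊆ A, J.Nonempty → 0 < homogeneityDegree a' b J) :
    kobaNielsenIntegral p a a' b A < ⊤ := by
  refine (setLIntegral_le_sum_of_mem_zpPiece (P := A.powerset) hb (fun U hU => mem_powerset.1 hU)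
    fun x hx => ⟨_, by simp, mem_zpPiece_filter hx⟩).trans_lt ?_
  refine ENNReal.sum_lt_top.2 fun U hU => ENNReal.mul_lt_top ?_ ?_
  · have hU := mem_powerset.1 hU
    exact kobaNielsenIntegral_lt_top hb (fun J hJ => h2 J (hJ.trans hU))
      fun J hJ => h0 J (hJ.trans hU)
  · rw [kobaNielsenIntegral_reflect]
    exact kobaNielsenIntegral_lt_top hb (fun J hJ => h2 J (hJ.trans sdiff_subset))
      fun J hJ => h1 J (hJ.trans sdiff_subset)

end Convergence

section PairSums

variable {T K : Finset ℕ}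

/-- A double product over the ordered pairs of distinct elements, as a product over the
increasing pairs. -/
@[to_additive]
theorem prod_prod_erase {M : Type*} [CommMonoid M] (K : Finset ℕ) (f : ℕ → ℕ → M) :
    ∏ i ∈ K, ∏ j ∈ K.erase i, f i j = ∏ q ∈ pairsIn K, f q.1 q.2 * f q.2 q.1 := by
  have h : ∀ i ∈ K, ∏ j ∈ K.erase i, f i j =
      (∏ j ∈ K, if i < j then f i j else 1) * ∏ j ∈ K, if j < i then f i j else 1 := by
    intro i _
    rw [← prod_mul_distrib, ← filter_ne', prod_filter]
    refine prod_congr rfl fun j _ => ?_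
    rcases lt_trichotomy i j with hij | rfl | hij
    · simp [hij, hij.ne', hij.not_gt]
    · simp
    · simp [hij, hij.ne, hij.not_gt]
  rw [prod_congr rfl h, prod_mul_distrib,
    prod_comm (f := fun i j => if j < i then f i j else 1)]
  simp only [pairsIn, prod_filter, prod_product, ← prod_mul_distrib]
  refine prod_congr rfl fun i _ => prod_congr rfl fun j _ => ?_
  split_ifs <;> simp

theorem sum_pairsIn_filter_mem {M : Type*} [AddCommGroup M] (hK : K ⊆ T) {h : ℕ → ℕ → M}
    (hsymm : ∀ i j, h i j = h j i) :
    ∑ q ∈ (pairsIn T).filter (fun q => q.1 ∈ K), h q.1 q.2 +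
        ∑ q ∈ (pairsIn T).filter (fun q => q.1 ∉ K ∧ q.2 ∈ K), h q.1 q.2 =
      ∑ q ∈ pairsIn K, h q.1 q.2 + ∑ i ∈ K, ∑ j ∈ T \ K, h i j := by
  have hT := sum_pairsIn_union (disjoint_sdiff (s := K) (t := T)) hsymm
  rw [union_sdiff_of_subset hK, ← sum_filter_add_sum_filter_not _ fun q => q.1 ∈ K,
    ← sum_filter_add_sum_filter_not ((pairsIn T).filter fun q => q.1 ∉ K) fun q => q.2 ∈ K,
    filter_filter, filter_filter] at hT
  have hrest : (pairsIn T).filter (fun q => q.1 ∉ K ∧ q.2 ∉ K) = pairsIn (T \ K) := by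
    ext q
    simp only [mem_filter, mem_pairsIn, mem_sdiff]
    tauto
  rw [hrest] at hT
  rw [← add_left_inj (∑ q ∈ pairsIn (T \ K), h q.1 q.2), add_assoc, hT]
  abel

theorem sum_sum_erase_of_subset {M : Type*} [AddCommMonoid M] (hK : K ⊆ T) {h : ℕ → ℕ → M}
    (hsymm : ∀ i j, h i j = h j i) :
    ∑ i ∈ K, ∑ j ∈ T.erase i, h i j =
      ∑ q ∈ pairsIn K, h q.1 q.2 + ∑ q ∈ pairsIn K, h q.1 q.2 + ∑ i ∈ K, ∑ j ∈ T \ K, h i j := by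
  have hsplit : ∀ i ∈ K, ∑ j ∈ T.erase i, h i j =
      ∑ j ∈ K.erase i, h i j + ∑ j ∈ T \ K, h i j := fun i hi => by
    rw [← sum_union (disjoint_sdiff.mono_left (erase_subset i K))]
    congr 1
    ext j
    simp only [mem_erase, mem_union, mem_sdiff]
    grind
  rw [sum_congr rfl hsplit, sum_add_distrib, sum_sum_erase, sum_add_distrib]
  simp only [hsymm]

end PairSums

section Integrability

variable {p : ℕ} [hp : Fact p.Prime] {A : Finset ℕ}

theorem measurableSet_pi_inter_padicCoord_ne (A : Finset ℕ) {S : Set ℚ_[p]}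
    (hS : MeasurableSet S) :
    MeasurableSet {x : A → ℚ_[p] | (∀ i, x i ∈ S) ∧
      ∀ q ∈ pairsIn A, padicCoord x q.1 ≠ padicCoord x q.2} := by
  simp only [ne_eq, Set.ofPred_and, Set.ofPred_forall]
  exact (MeasurableSet.iInter fun i => measurable_pi_apply i hS).inter
    ((pairsIn A).measurableSet_biInter fun q _ =>
      (measurableSet_eq_fun (measurable_padicCoord _) (measurable_padicCoord _)).compl)

theorem measurableSet_Z0set (A : Finset ℕ) : MeasurableSet (Z0set p A) :=
  measurableSet_pi_inter_padicCoord_ne A ((measurableSet_le measurable_norm measurable_const).inter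
    ((measurableSet_singleton 0).compl.inter (measurableSet_singleton 1).compl))

theorem measurableSet_Z1set (A : Finset ℕ) : MeasurableSet (Z1set p A) :=
  measurableSet_pi_inter_padicCoord_ne A ((measurableSet_le measurable_norm measurable_const).inter
    (measurableSet_singleton 0).compl)

theorem measurable_Z0integrand (N : ℕ) (s : ℕ → ℕ → ℂ) (A : Finset ℕ) :
    Measurable (Z0integrand p N s A) := by
  unfold Z0integrand
  fun_prop

theorem measurable_Z1integrand (N : ℕ) (s : ℕ → ℕ → ℂ) (A : Finset ℕ) :
    Measurable (Z1integrand p N s A) := by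
  unfold Z1integrand
  fun_prop

theorem nnnorm_norm_cpow {E : Type*} [NormedAddCommGroup E] {x : E} (hx : x ≠ 0) (c : ℂ) :
    ‖(‖x‖ : ℂ) ^ c‖₊ = ‖x‖₊ ^ c.re :=
  NNReal.eq (Complex.norm_cpow_eq_rpow_re_of_pos (norm_pos_iff.2 hx) c)

theorem nnnorm_Z0integrand {N : ℕ} {s : ℕ → ℕ → ℂ} {x : A → ℚ_[p]} (hx : x ∈ Z0set p A) :
    ‖Z0integrand p N s A x‖₊ = kobaNielsen (fun i => (s 1 i).re) (fun i => (s (N - 1) i).re)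
      (fun i j => (s i j).re) A (padicCoord x) := by
  rw [Z0integrand, kobaNielsen, nnnorm_mul, nnnorm_prod, nnnorm_prod]
  congr 1
  · refine prod_congr rfl fun i hi => ?_
    rw [padicCoord_of_mem _ hi, nnnorm_mul, nnnorm_norm_cpow (hx.1 _).2.1,
      nnnorm_norm_cpow (sub_ne_zero.2 (hx.1 _).2.2.symm)]
  · exact prod_congr rfl fun q hq => nnnorm_norm_cpow (sub_ne_zero.2 (hx.2 q hq)) _

theorem nnnorm_Z1integrand {N : ℕ} {s : ℕ → ℕ → ℂ} {x : A → ℚ_[p]} (hx : x ∈ Z1set p A) :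
    ‖Z1integrand p N s A x‖₊ = kobaNielsen
      (fun i => (-(2 + s 1 i + s (N - 1) i + ∑ j ∈ (Tset N).erase i, s i j)).re) 0
      (fun i j => (s i j).re) A (padicCoord x) := by
  rw [Z1integrand, kobaNielsen, nnnorm_mul, nnnorm_prod, nnnorm_prod, mul_comm]
  congr 1
  · refine prod_congr rfl fun i hi => ?_
    rw [padicCoord_of_mem _ hi, nnnorm_norm_cpow (hx.1 _).2, Pi.zero_apply, NNReal.rpow_zero,
      mul_one]
  · exact prod_congr rfl fun q hq => nnnorm_norm_cpow (sub_ne_zero.2 (hx.2 q hq)) _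

theorem integrableOn_of_kobaNielsenIntegral_lt_top {a a' : ℕ → ℝ} {b : ℕ → ℕ → ℝ}
    {f : (A → ℚ_[p]) → ℂ} {S : Set (A → ℚ_[p])} (hf : Measurable f) (hS : MeasurableSet S)
    (hSA : S ⊆ zpBall p A) (h : ∀ x ∈ S, ‖f x‖₊ = kobaNielsen a a' b A (padicCoord x))
    (hfin : kobaNielsenIntegral p a a' b A < ⊤) : IntegrableOn f S (padicPi p A) := by
  refine ⟨hf.aestronglyMeasurable, lt_of_le_of_lt ?_ hfin⟩
  rw [setLIntegral_congr_fun hS fun x hx => by rw [enorm_eq_nnnorm, h x hx]]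
  exact lintegral_mono_set hSA

theorem integrableOn_Z0integrand {N : ℕ} {s : ℕ → ℕ → ℂ} (hsym : ∀ i j, s i j = s j i)
    (hs : H0C N s) (hA : A ⊆ Tset N) :
    IntegrableOn (Z0integrand p N s A) (Z0set p A) (padicPi p A) := by
  refine integrableOn_of_kobaNielsenIntegral_lt_top (measurable_Z0integrand N s A)
    (measurableSet_Z0set A) (fun x hx i => (hx.1 i).1) (fun x hx => nnnorm_Z0integrand hx)
    (kobaNielsenIntegral_two_lt_top (fun i j => by rw [hsym])
      (fun J hJ => hs.2.1 J (hJ.trans hA)) (fun J hJ hne => ?_) fun J hJ hne => ?_)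
  · exact hs.2.2.1 1 (by simp) J (hJ.trans hA) J Subset.rfl (Or.inr hne.card_pos)
  · exact hs.2.2.1 (N - 1) (by simp) J (hJ.trans hA) J Subset.rfl (Or.inr hne.card_pos)

theorem integrableOn_Z1integrand {N : ℕ} {s : ℕ → ℕ → ℂ} (hsym : ∀ i j, s i j = s j i)
    (hs : H0C N s) (hA : A ⊆ Tset N) :
    IntegrableOn (Z1integrand p N s A) (Z1set p A) (padicPi p A) := by
  have hb : ∀ i j, (s i j).re = (s j i).re := fun i j => by rw [hsym]
  refine integrableOn_of_kobaNielsenIntegral_lt_top (measurable_Z1integrand N s A)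
    (measurableSet_Z1set A) (fun x hx i => (hx.1 i).1) (fun x hx => nnnorm_Z1integrand hx)
    (kobaNielsenIntegral_lt_top hb (fun J hJ => hs.2.1 J (hJ.trans hA)) fun J hJ hne => ?_)
  have h := hs.1 J (hJ.trans hA) hne
  rw [add_assoc, sum_pairsIn_filter_mem (hJ.trans hA) hb] at h
  rw [homogeneityDegree]
  simp only [Complex.neg_re, Complex.add_re, Complex.re_sum, Complex.re_ofNat, sum_neg_distrib,
    sum_add_distrib, sum_sum_erase_of_subset (hJ.trans hA) hb, sum_const, nsmul_eq_mul] at h ⊢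
  linarith

end Integrability

section CoordinatewiseInversion

variable {p : ℕ} [hp : Fact p.Prime] {A : Finset ℕ}

/-- Coordinatewise inversion, exchanging `ℤ_p ∖ {0}` and `ℚ_p ∖ ℤ_p`. -/
def padicInversion (p : ℕ) [Fact p.Prime] (A : Finset ℕ) (x : A → ℚ_[p]) : A → ℚ_[p] :=
  fun i => (p * x i)⁻¹

theorem measurePreserving_padicInversion (A : Finset ℕ) :
    MeasurePreserving (padicInversion p A)
      ((padicPi p A).withDensity fun x => ((∏ i, (p * ‖x i‖₊⁻¹ ^ 2) : ℝ≥0) : ℝ≥0∞))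
      (padicPi p A) :=
  measurePreserving_prime_mul_inv.padicPi (by fun_prop)

theorem padicInversion_involutive (A : Finset ℕ) :
    Function.Involutive (padicInversion p A) := fun x => by
  funext i
  have hp0 : (p : ℚ_[p]) ≠ 0 := by exact_mod_cast hp.out.ne_zero
  simp only [padicInversion]
  field_simp

theorem measurableEmbedding_padicInversion (A : Finset ℕ) :
    MeasurableEmbedding (padicInversion p A) :=
  (MeasurableEquiv.ofInvolutive _ (padicInversion_involutive A)
    (measurePreserving_padicInversion A).measurable).measurableEmbedding

theorem padicCoord_padicInversion (x : A → ℚ_[p]) {i : ℕ} (hi : i ∈ A) :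
    padicCoord (padicInversion p A x) i = (p * padicCoord x i)⁻¹ := by
  rw [padicCoord_of_mem _ hi, padicCoord_of_mem _ hi, padicInversion]

theorem norm_prime_mul_inv (x : ℚ_[p]) : ‖(p * x)⁻¹‖ = p * ‖x‖⁻¹ := by
  rw [norm_inv, norm_mul, Padic.norm_p, mul_inv, inv_inv]

theorem norm_prime_mul_inv_sub {x y : ℚ_[p]} (hx : x ≠ 0) (hy : y ≠ 0) :
    ‖(p * x)⁻¹ - (p * y)⁻¹‖ = p * ‖x - y‖ * ‖x‖⁻¹ * ‖y‖⁻¹ := by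
  have hp0 : (p : ℚ_[p]) ≠ 0 := by exact_mod_cast hp.out.ne_zero
  have h : (p * x)⁻¹ - (p * y)⁻¹ = (p : ℚ_[p])⁻¹ * (y - x) * x⁻¹ * y⁻¹ := by
    field_simp
  rw [h, norm_mul, norm_mul, norm_mul, norm_inv, norm_inv, norm_inv, Padic.norm_p, inv_inv,
    norm_sub_rev y x]

theorem one_lt_norm_prime_mul_inv_iff {x : ℚ_[p]} : 1 < ‖(p * x)⁻¹‖ ↔ ‖x‖ ≤ 1 ∧ x ≠ 0 := by
  have hp0 : (0 : ℝ) < p := by exact_mod_cast hp.out.pos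
  rcases eq_or_ne x 0 with rfl | hx
  · simp
  have hx0 : 0 < ‖x‖ := norm_pos_iff.2 hx
  rw [norm_prime_mul_inv, ← div_eq_mul_inv, one_lt_div hx0, and_iff_left hx]
  have h := norm_lt_one_iff_le_inv ((p : ℚ_[p]) * x)
  rw [norm_mul, Padic.norm_p, mul_le_iff_le_one_right (inv_pos.2 hp0), inv_mul_lt_iff₀ hp0,
    mul_one] at h
  exact h

/-- The points of `(ℚ_p ∖ ℤ_p)^A` with pairwise distinct coordinates. -/
def padicOuter (p : ℕ) [Fact p.Prime] (A : Finset ℕ) : Set (A → ℚ_[p]) :=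
  {x | (∀ i, 1 < ‖x i‖) ∧ ∀ q ∈ pairsIn A, padicCoord x q.1 ≠ padicCoord x q.2}

theorem measurableSet_padicOuter (A : Finset ℕ) : MeasurableSet (padicOuter p A) :=
  measurableSet_pi_inter_padicCoord_ne A (measurableSet_lt measurable_const measurable_norm)

theorem padicInversion_preimage_padicOuter (A : Finset ℕ) :
    padicInversion p A ⁻¹' padicOuter p A = Z1set p A := by
  ext x
  refine and_congr (forall_congr' fun i => one_lt_norm_prime_mul_inv_iff)
    (forall₂_congr fun q hq => ?_)
  have hp0 : (p : ℚ_[p]) ≠ 0 := by exact_mod_cast hp.out.ne_zero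
  have hq := (mem_pairsIn.1 hq).1
  rw [padicCoord_padicInversion _ hq.1, padicCoord_padicInversion _ hq.2, ne_eq, inv_inj,
    mul_right_inj' hp0]

/-- The factor of the Koba–Nielsen integrand carried by the coordinates in `J`, when these
lie outside `ℤ_p` and the coordinates in `I` lie in `ℤ_p`. -/
def outerIntegrand (p N : ℕ) [Fact p.Prime] (s : ℕ → ℕ → ℂ) (I J : Finset ℕ)
    (x : J → ℚ_[p]) : ℂ :=
  (∏ i ∈ J, (‖padicCoord x i‖ : ℂ) ^ (s 1 i + s (N - 1) i + ∑ j ∈ I, s i j)) *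
  ∏ q ∈ pairsIn J, (‖padicCoord x q.1 - padicCoord x q.2‖ : ℂ) ^ s q.1 q.2

theorem prod_cpow_eq_cpow_sum {ι : Type*} {c : ℂ} (hc : c ≠ 0) (t : Finset ι) (f : ι → ℂ) :
    ∏ i ∈ t, c ^ f i = c ^ ∑ i ∈ t, f i := by
  induction t using Finset.cons_induction with
  | empty => simp
  | cons a t ha ih => rw [prod_cons, sum_cons, ih, Complex.cpow_add _ _ hc]

theorem ofReal_mul_cpow {a b : ℝ} (ha : 0 ≤ a) (hb : 0 ≤ b) (c : ℂ) :
    ((a * b : ℝ) : ℂ) ^ c = (a : ℂ) ^ c * (b : ℂ) ^ c := by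
  rw [Complex.ofReal_mul, Complex.mul_cpow_ofReal_nonneg ha hb]

theorem ofReal_inv_cpow {a : ℝ} (ha : 0 ≤ a) (c : ℂ) :
    ((a⁻¹ : ℝ) : ℂ) ^ c = (a : ℂ) ^ (-c) := by
  rw [Complex.ofReal_inv, Complex.inv_cpow, Complex.cpow_neg]
  rw [Complex.arg_ofReal_of_nonneg ha]
  exact Real.pi_pos.ne

theorem Mexp_eq {N : ℕ} {s : ℕ → ℕ → ℂ} (hsym : ∀ i j, s i j = s j i) {I : Finset ℕ}
    (hI : I ⊆ Tset N) :
    Mexp N s I = ∑ i ∈ Tset N \ I, (1 + (s 1 i + s (N - 1) i + ∑ j ∈ I, s i j)) +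
      ∑ q ∈ pairsIn (Tset N \ I), s q.1 q.2 := by
  have hfilter : (pairsIn (Tset N)).filter (fun q => q.1 ∈ I ∧ q.2 ∈ Tset N \ I) =
      (pairsIn (Tset N)).filter fun q => q.1 ∉ Tset N \ I ∧ q.2 ∈ Tset N \ I := by
    refine filter_congr fun q hq => and_congr_left fun _ => ?_
    have := (mem_pairsIn.1 hq).1.1
    simp [this]
  have h := sum_pairsIn_filter_mem (sdiff_subset (s := Tset N) (t := I)) hsym
  rw [Finset.sdiff_sdiff_eq_self hI] at h
  rw [Mexp, hfilter, add_assoc, h]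
  simp only [sum_add_distrib, sum_const, nsmul_eq_mul, mul_one]
  ring

theorem smul_outerIntegrand_padicInversion {N : ℕ} {s : ℕ → ℕ → ℂ}
    (hsym : ∀ i j, s i j = s j i) {I J : Finset ℕ} (hI : I ⊆ Tset N) (hJ : Tset N \ I = J)
    {x : J → ℚ_[p]} (hx : x ∈ Z1set p J) :
    (∏ i, (p * ‖x i‖₊⁻¹ ^ 2) : ℝ≥0) • outerIntegrand p N s I J (padicInversion p J x) =
      (p : ℂ) ^ Mexp N s I * Z1integrand p N s J x := by
  set n : ℕ → ℂ := fun i => (‖padicCoord x i‖ : ℂ)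
  set e : ℕ → ℂ := fun i => s 1 i + s (N - 1) i + ∑ j ∈ I, s i j
  have hp0 : (p : ℂ) ≠ 0 := by exact_mod_cast hp.out.ne_zero
  have hpR : (0 : ℝ) ≤ p := p.cast_nonneg
  have hx0 : ∀ i ∈ J, padicCoord x i ≠ 0 := fun i hi => by
    rw [padicCoord_of_mem _ hi]
    exact (hx.1 _).2
  have hn : ∀ i ∈ J, n i ≠ 0 := fun i hi =>
    Complex.ofReal_ne_zero.2 (norm_ne_zero_iff.2 (hx0 i hi))
  have hdens : (((∏ i, (p * ‖x i‖₊⁻¹ ^ 2) : ℝ≥0) : ℝ) : ℂ) = ∏ i ∈ J, (p : ℂ) * n i ^ (-2 : ℂ) := by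
    rw [← prod_coe_sort J]
    push_cast
    refine prod_congr rfl fun i _ => ?_
    rw [Complex.cpow_neg, Complex.cpow_ofNat]
    simp [n]
  have hpoint : ∀ i ∈ J, (‖padicCoord (padicInversion p J x) i‖ : ℂ) ^ e i =
      (p : ℂ) ^ e i * n i ^ (-e i) := fun i hi => by
    rw [padicCoord_padicInversion x hi, norm_prime_mul_inv,
      ofReal_mul_cpow hpR (by positivity), ofReal_inv_cpow (norm_nonneg _), Complex.ofReal_natCast]
  have hpair : ∀ q ∈ pairsIn J, (‖padicCoord (padicInversion p J x) q.1 -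
      padicCoord (padicInversion p J x) q.2‖ : ℂ) ^ s q.1 q.2 =
      (p : ℂ) ^ s q.1 q.2 * (‖padicCoord x q.1 - padicCoord x q.2‖ : ℂ) ^ s q.1 q.2 *
        (n q.1 ^ (-s q.1 q.2) * n q.2 ^ (-s q.2 q.1)) := fun q hq => by
    have hq := (mem_pairsIn.1 hq).1
    rw [padicCoord_padicInversion x hq.1, padicCoord_padicInversion x hq.2,
      norm_prime_mul_inv_sub (hx0 _ hq.1) (hx0 _ hq.2), ofReal_mul_cpow (by positivity)
      (by positivity), ofReal_mul_cpow (by positivity) (by positivity), ofReal_mul_cpow hpR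
      (norm_nonneg _), ofReal_inv_cpow (norm_nonneg _), ofReal_inv_cpow (norm_nonneg _),
      Complex.ofReal_natCast, hsym q.2 q.1, mul_assoc]
  have hexp : ∀ i ∈ J, n i ^ (-(2 + s 1 i + s (N - 1) i + ∑ j ∈ (Tset N).erase i, s i j)) =
      n i ^ (-2 : ℂ) * n i ^ (-e i) * ∏ j ∈ J.erase i, n i ^ (-s i j) := fun i hi => by
    have hsum : ∑ j ∈ (Tset N).erase i, s i j = ∑ j ∈ I, s i j + ∑ j ∈ J.erase i, s i j := by
      rw [← sum_union ((hJ ▸ disjoint_sdiff).mono_right (erase_subset i J))]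
      congr 1
      ext j
      have := @hI j
      simp only [← hJ, mem_erase, mem_union, mem_sdiff] at hi ⊢
      grind
    rw [prod_cpow_eq_cpow_sum (hn i hi), ← Complex.cpow_add _ _ (hn i hi),
      ← Complex.cpow_add _ _ (hn i hi), hsum, sum_neg_distrib]
    congr 1
    simp only [e]
    ring
  rw [NNReal.smul_def, Complex.real_smul, hdens, outerIntegrand, Z1integrand,
    prod_congr rfl hpoint, prod_congr rfl hpair, prod_congr rfl hexp, Mexp_eq hsym hI, hJ,
    Complex.cpow_add _ _ hp0, ← prod_cpow_eq_cpow_sum hp0, ← prod_cpow_eq_cpow_sum hp0,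
    prod_congr rfl fun i _ => Complex.cpow_add 1 (e i) hp0]
  simp only [prod_mul_distrib, Complex.cpow_one, prod_prod_erase]
  ring

theorem integrableOn_outerIntegrand_and_setIntegral {N : ℕ} {s : ℕ → ℕ → ℂ}
    (hsym : ∀ i j, s i j = s j i) (hs : H0C N s) {I : Finset ℕ} (hI : I ⊆ Tset N) :
    IntegrableOn (outerIntegrand p N s I (Tset N \ I)) (padicOuter p (Tset N \ I))
        (padicPi p ↥(Tset N \ I)) ∧
      ∫ x in padicOuter p (Tset N \ I), outerIntegrand p N s I (Tset N \ I) x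
          ∂(padicPi p ↥(Tset N \ I)) =
        (p : ℂ) ^ Mexp N s I * ∫ x in Z1set p (Tset N \ I), Z1integrand p N s (Tset N \ I) x
          ∂(padicPi p ↥(Tset N \ I)) := by
  have hm : Measurable fun x : ↥(Tset N \ I) → ℚ_[p] => (∏ i, (p * ‖x i‖₊⁻¹ ^ 2) : ℝ≥0) := by
    fun_prop
  have hZ := measurableSet_Z1set (p := p) (Tset N \ I)
  have hmp := measurePreserving_padicInversion (p := p) (Tset N \ I)
  have hemb := measurableEmbedding_padicInversion (p := p) (Tset N \ I)
  constructor
  · rw [← hmp.integrableOn_comp_preimage hemb, padicInversion_preimage_padicOuter, IntegrableOn,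
      restrict_withDensity hZ, integrable_withDensity_iff_integrable_smul hm]
    exact IntegrableOn.congr_fun
      ((integrableOn_Z1integrand hsym hs sdiff_subset).const_mul ((p : ℂ) ^ Mexp N s I))
      (fun x hx => (smul_outerIntegrand_padicInversion hsym hI rfl hx).symm) hZ
  · rw [← hmp.setIntegral_preimage_emb hemb, padicInversion_preimage_padicOuter,
      setIntegral_withDensity_eq_setIntegral_smul hm _ hZ, ← integral_const_mul]
    exact setIntegral_congr_fun hZ fun x hx => smul_outerIntegrand_padicInversion hsym hI rfl hx

end CoordinatewiseInversion

section Decomposition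

variable {p : ℕ} [hp : Fact p.Prime] {N : ℕ} {I : Finset ℕ}

/-- The part of `ZNset p N` where exactly the coordinates in `I` lie in `ℤ_p`. -/
def ZNpiece (p N : ℕ) [Fact p.Prime] (I : Finset ℕ) : Set (↥(Tset N) → ℚ_[p]) :=
  padicSplit I (Tset N \ I) ⁻¹' (Z0set p I ×ˢ padicOuter p (Tset N \ I))

theorem mem_ZNpiece_iff (hI : I ⊆ Tset N) {x : ↥(Tset N) → ℚ_[p]} :
    x ∈ ZNpiece p N I ↔ x ∈ ZNset p N ∧ ∀ i ∈ Tset N, ‖padicCoord x i‖ ≤ 1 ↔ i ∈ I := by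
  constructor
  · rintro ⟨⟨h0, h0'⟩, h1, h1'⟩
    have hin : ∀ i ∈ I, ‖padicCoord x i‖ ≤ 1 ∧ padicCoord x i ≠ 0 ∧ padicCoord x i ≠ 1 :=
      fun i hi => h0 ⟨i, hi⟩
    have hout : ∀ i ∈ Tset N \ I, 1 < ‖padicCoord x i‖ := fun i hi => h1 ⟨i, hi⟩
    have hT : ∀ i ∈ Tset N, ‖padicCoord x i‖ ≤ 1 ↔ i ∈ I := fun i hi =>
      ⟨fun h => by_contra fun hiI => (hout i (mem_sdiff.2 ⟨hi, hiI⟩)).not_ge h,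
        fun h => (hin i h).1⟩
    refine ⟨⟨fun i => ?_, fun q hq => ?_⟩, hT⟩
    · by_cases hi : (i : ℕ) ∈ I
      · simpa using (hin i hi).2
      · have := hout i (mem_sdiff.2 ⟨i.2, hi⟩)
        rw [padicCoord_coe] at this
        refine ⟨fun h => ?_, fun h => ?_⟩ <;> norm_num [h] at this
    · have hqT := mem_pairsIn.1 hq
      by_cases hq1 : q.1 ∈ I <;> by_cases hq2 : q.2 ∈ I
      · have := h0' q (mem_pairsIn.2 ⟨⟨hq1, hq2⟩, hqT.2⟩)
        rwa [padicCoord_padicSplit_fst x hq1, padicCoord_padicSplit_fst x hq2] at this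
      · exact fun h => hq2 ((hT _ hqT.1.2).1 (h ▸ (hT _ hqT.1.1).2 hq1))
      · exact fun h => hq1 ((hT _ hqT.1.1).1 (h ▸ (hT _ hqT.1.2).2 hq2))
      · have hq1 := mem_sdiff.2 ⟨hqT.1.1, hq1⟩
        have hq2 := mem_sdiff.2 ⟨hqT.1.2, hq2⟩
        have := h1' q (mem_pairsIn.2 ⟨⟨hq1, hq2⟩, hqT.2⟩)
        rwa [padicCoord_padicSplit_snd x hq1, padicCoord_padicSplit_snd x hq2] at this
  · rintro ⟨⟨h, h'⟩, hT⟩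
    refine ⟨⟨fun i => ?_, fun q hq => ?_⟩, fun i => ?_, fun q hq => ?_⟩
    · have hi := hI i.2
      refine ⟨(hT i hi).2 i.2, ?_⟩
      simpa [padicSplit, padicCoord_of_mem x hi] using h ⟨i, hi⟩
    · have hq := mem_pairsIn.1 hq
      rw [padicCoord_padicSplit_fst x hq.1.1, padicCoord_padicSplit_fst x hq.1.2]
      exact h' q (mem_pairsIn.2 ⟨⟨hI hq.1.1, hI hq.1.2⟩, hq.2⟩)
    · have hi := mem_sdiff.1 i.2
      exact not_le.1 fun hle => hi.2 ((hT i hi.1).1 hle)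
    · have hq := mem_pairsIn.1 hq
      rw [padicCoord_padicSplit_snd x hq.1.1, padicCoord_padicSplit_snd x hq.1.2]
      exact h' q (mem_pairsIn.2 ⟨⟨(mem_sdiff.1 hq.1.1).1, (mem_sdiff.1 hq.1.2).1⟩, hq.2⟩)

theorem biUnion_ZNpiece (p N : ℕ) [Fact p.Prime] :
    ⋃ I ∈ (Tset N).powerset, ZNpiece p N I = ZNset p N := by
  ext x
  simp only [Set.mem_iUnion, exists_prop, mem_powerset]
  refine ⟨fun ⟨I, hI, hx⟩ => ((mem_ZNpiece_iff hI).1 hx).1, fun hx =>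
    ⟨(Tset N).filter fun i => ‖padicCoord x i‖ ≤ 1, filter_subset _ _,
      (mem_ZNpiece_iff (filter_subset _ _)).2 ⟨hx, fun i hi => by simp [hi]⟩⟩⟩

theorem pairwise_disjoint_ZNpiece (p N : ℕ) [Fact p.Prime] :
    Set.Pairwise ((Tset N).powerset : Set (Finset ℕ)) (Function.onFun Disjoint (ZNpiece p N)) := by
  intro I hI J hJ hne
  have hI := mem_powerset.1 hI
  have hJ := mem_powerset.1 hJ
  refine Set.disjoint_left.2 fun x hxI hxJ => hne ?_
  have hxI := ((mem_ZNpiece_iff hI).1 hxI).2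
  have hxJ := ((mem_ZNpiece_iff hJ).1 hxJ).2
  ext i
  exact ⟨fun h => (hxJ i (hI h)).1 ((hxI i (hI h)).2 h),
    fun h => (hxI i (hJ h)).1 ((hxJ i (hJ h)).2 h)⟩

theorem measurableSet_ZNpiece (hI : I ⊆ Tset N) : MeasurableSet (ZNpiece p N I) :=
  (measurableEmbedding_padicSplit (union_sdiff_of_subset hI) disjoint_sdiff).measurable
    ((measurableSet_Z0set I).prod (measurableSet_padicOuter _))

theorem ZNintegrand_eq_of_mem_ZNpiece {s : ℕ → ℕ → ℂ} (hsym : ∀ i j, s i j = s j i)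
    (hI : I ⊆ Tset N) {x : ↥(Tset N) → ℚ_[p]} (hx : x ∈ ZNpiece p N I) :
    ZNintegrand p N s x = Z0integrand p N s I (padicSplit I (Tset N \ I) x).1 *
      outerIntegrand p N s I (Tset N \ I) (padicSplit I (Tset N \ I) x).2 := by
  have hin : ∀ i ∈ I, ‖padicCoord x i‖ ≤ 1 := fun i hi => (hx.1.1 ⟨i, hi⟩).1
  have hout : ∀ i ∈ Tset N \ I, 1 < ‖padicCoord x i‖ := fun i hi => hx.2.1 ⟨i, hi⟩
  have hZ0 : Z0integrand p N s I (padicSplit I (Tset N \ I) x).1 =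
      (∏ i ∈ I, (‖padicCoord x i‖ : ℂ) ^ s 1 i * (‖1 - padicCoord x i‖ : ℂ) ^ s (N - 1) i) *
        ∏ q ∈ pairsIn I, (‖padicCoord x q.1 - padicCoord x q.2‖ : ℂ) ^ s q.1 q.2 := by
    rw [Z0integrand]
    congr 1
    · exact prod_congr rfl fun i hi => by rw [padicCoord_padicSplit_fst x hi]
    · refine prod_congr rfl fun q hq => ?_
      have hq := (mem_pairsIn.1 hq).1
      rw [padicCoord_padicSplit_fst x hq.1, padicCoord_padicSplit_fst x hq.2]
  have hG : outerIntegrand p N s I (Tset N \ I) (padicSplit I (Tset N \ I) x).2 =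
      (∏ i ∈ Tset N \ I, (‖padicCoord x i‖ : ℂ) ^ s 1 i *
        (‖1 - padicCoord x i‖ : ℂ) ^ s (N - 1) i) *
        (∏ i ∈ Tset N \ I, ∏ j ∈ I, (‖padicCoord x i - padicCoord x j‖ : ℂ) ^ s i j) *
        ∏ q ∈ pairsIn (Tset N \ I),
          (‖padicCoord x q.1 - padicCoord x q.2‖ : ℂ) ^ s q.1 q.2 := by
    rw [outerIntegrand, ← prod_mul_distrib]
    congr 1
    · refine prod_congr rfl fun i hi => ?_
      have h1 := hout i hi
      have h0 : (‖padicCoord x i‖ : ℂ) ≠ 0 :=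
        Complex.ofReal_ne_zero.2 (zero_lt_one.trans h1).ne'
      rw [padicCoord_padicSplit_snd x hi, norm_sub_eq_of_lt (by rwa [norm_one]),
        Complex.cpow_add _ _ h0, Complex.cpow_add _ _ h0, ← prod_cpow_eq_cpow_sum h0]
      congr 1
      refine prod_congr rfl fun j hj => ?_
      rw [norm_sub_rev, norm_sub_eq_of_lt ((hin j hj).trans_lt h1)]
    · refine prod_congr rfl fun q hq => ?_
      have hq := (mem_pairsIn.1 hq).1
      rw [padicCoord_padicSplit_snd x hq.1, padicCoord_padicSplit_snd x hq.2]
  have hpairs := prod_pairsIn_union (disjoint_sdiff (s := I) (t := Tset N))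
    (h := fun i j => (‖padicCoord x i - padicCoord x j‖ : ℂ) ^ s i j)
    fun i j => by rw [norm_sub_rev, hsym]
  have hpoints := prod_union (disjoint_sdiff (s := I) (t := Tset N))
    (f := fun i => (‖padicCoord x i‖ : ℂ) ^ s 1 i * (‖1 - padicCoord x i‖ : ℂ) ^ s (N - 1) i)
  rw [union_sdiff_of_subset hI] at hpairs hpoints
  have hcross : ∏ i ∈ I, ∏ j ∈ Tset N \ I,
      (‖padicCoord x i - padicCoord x j‖ : ℂ) ^ s i j =
      ∏ i ∈ Tset N \ I, ∏ j ∈ I, (‖padicCoord x i - padicCoord x j‖ : ℂ) ^ s i j := by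
    rw [prod_comm]
    exact prod_congr rfl fun i _ => prod_congr rfl fun j _ => by rw [norm_sub_rev, hsym]
  rw [ZNintegrand, hpairs, hpoints, hZ0, hG, hcross]
  ring

theorem integrableOn_ZNpiece_and_setIntegral {s : ℕ → ℕ → ℂ} (hsym : ∀ i j, s i j = s j i)
    (hs : H0C N s) (hI : I ⊆ Tset N) :
    IntegrableOn (ZNintegrand p N s) (ZNpiece p N I) (padicPi p ↥(Tset N)) ∧
      ∫ x in ZNpiece p N I, ZNintegrand p N s x ∂(padicPi p ↥(Tset N)) =
        (p : ℂ) ^ Mexp N s I * ((∫ x in Z0set p I, Z0integrand p N s I x ∂(padicPi p ↥I)) *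
          ∫ x in Z1set p (Tset N \ I), Z1integrand p N s (Tset N \ I) x
            ∂(padicPi p ↥(Tset N \ I))) := by
  have hmp := measurePreserving_padicSplit (p := p) (union_sdiff_of_subset hI) disjoint_sdiff
  have hemb := measurableEmbedding_padicSplit (p := p) (union_sdiff_of_subset hI) disjoint_sdiff
  have hZ0 := integrableOn_Z0integrand (p := p) hsym hs hI
  obtain ⟨hG, hGint⟩ := integrableOn_outerIntegrand_and_setIntegral (p := p) hsym hs hI
  have heq := fun x (hx : x ∈ ZNpiece p N I) => ZNintegrand_eq_of_mem_ZNpiece hsym hI hx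
  constructor
  · refine IntegrableOn.congr_fun ?_ (fun x hx => (heq x hx).symm) (measurableSet_ZNpiece hI)
    refine (hmp.integrableOn_comp_preimage hemb (f := fun z => Z0integrand p N s I z.1 *
      outerIntegrand p N s I (Tset N \ I) z.2)).2 ?_
    rw [IntegrableOn, ← Measure.prod_restrict]
    exact Integrable.mul_prod hZ0 hG
  · rw [setIntegral_congr_fun (measurableSet_ZNpiece hI) heq, ZNpiece,
      hmp.setIntegral_preimage_emb hemb fun z => Z0integrand p N s I z.1 *
        outerIntegrand p N s I (Tset N \ I) z.2, setIntegral_prod_mul, hGint]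
    ring

end Decomposition

/-- For `s ∈ H₀(ℂ)` all the integrals `Z₀(s;I)`, `Z₁(s;T∖I)` converge absolutely, and
`Z^{(N)}(s) = Σ_{I ⊆ T} p^{M_I(s)} Z₀(s;I) Z₁(s;T∖I)`. -/
theorem zeta_decomposition (p : ℕ) [Fact p.Prime] (N : ℕ) (hN : 4 ≤ N)
    (s : ℕ → ℕ → ℂ) (hsym : ∀ i j, s i j = s j i) (hs : H0C N s) :
    (∀ I ∈ (Tset N).powerset,
      IntegrableOn (Z0integrand p N s I) (Z0set p I) (padicPi p ↥I) ∧
      IntegrableOn (Z1integrand p N s (Tset N \ I)) (Z1set p (Tset N \ I))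
        (padicPi p ↥(Tset N \ I))) ∧
    (∫ x in ZNset p N, ZNintegrand p N s x ∂(padicPi p ↥(Tset N))) =
      ∑ I ∈ (Tset N).powerset, (p : ℂ) ^ Mexp N s I *
        ((∫ x in Z0set p I, Z0integrand p N s I x ∂(padicPi p ↥I)) *
          ∫ x in Z1set p (Tset N \ I), Z1integrand p N s (Tset N \ I) x
            ∂(padicPi p ↥(Tset N \ I))) := by
  refine ⟨fun I hI => ⟨integrableOn_Z0integrand hsym hs (mem_powerset.1 hI),
    integrableOn_Z1integrand hsym hs sdiff_subset⟩, ?_⟩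
  rw [← biUnion_ZNpiece, integral_biUnion_finset _
    (fun I hI => measurableSet_ZNpiece (mem_powerset.1 hI)) (pairwise_disjoint_ZNpiece p N)
    fun I hI => (integrableOn_ZNpiece_and_setIntegral hsym hs (mem_powerset.1 hI)).1]
  exact sum_congr rfl fun I hI =>
    (integrableOn_ZNpiece_and_setIntegral hsym hs (mem_powerset.1 hI)).2
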